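/- arXiv:1401.6654 — 4 statements merged into one kernel-verified Lean document; each statement's English description precedes it below -/
import Mathlib

section
/- Let X be a metric space which is uniquely geodesic with geodesics depending continuously on their endpoints; that is, there exists a continuous map γ : X × X × [0,1] → X such that for all x, y ∈ X one has γ(x,y,0) = x, γ(x,y,1) = y, dist(γ(x,y,s), γ(x,y,t)) = |s − t| · dist(x,y) for all s, t ∈ [0,1], and moreover every isometric embedding of the interval [0, dist(x,y)] into X sending the endpoints 0 and dist(x,y) to x and y respectively has image equal to the image of t ↦ γ(x,y,t). Assume that X has compact topological dimension at most n < ∞, i.e., for every compact subset K of X, every open cover of K admits an open refinement covering K in which every point of K belongs to at most n + 1 members of the refinement. Let A₁, …, A_m be convex subsets of X (a set A is convex if for all x, y ∈ A the image of the segment t ↦ γ(x,y,t) is contained in A) such that every subcollection of cardinality at most n + 1 has a nonempty intersection. Then ⋂_{i=1}^m A_i is nonempty. -/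
/-- `X` has compact topological dimension at most `n`: every open cover of every
compact subset `K` admits an open refinement covering `K` in which every point of `K`
belongs to at most `n + 1` members. -/
def CompactTopDimLE (X : Type) [TopologicalSpace X] (n : ℕ) : Prop :=
  ∀ K : Set X, IsCompact K → ∀ (ι : Type) (U : ι → Set X),
    (∀ i, IsOpen (U i)) → K ⊆ ⋃ i, U i →
    ∃ (κ : Type) (V : κ → Set X), (∀ j, IsOpen (V j)) ∧ K ⊆ (⋃ j, V j) ∧
      (∀ j, ∃ i, V j ⊆ U i) ∧
      ∀ x ∈ K, ∃ s : Finset κ, s.card ≤ n + 1 ∧ ∀ j, x ∈ V j → j ∈ s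

/-!
By induction on the number of sets, choose points `p i` lying in every set except possibly `A i`.
Joining them successively along `γ` gives a continuous map from a cube of dimension at least `n + 1`
to `X`. Collapse the cube to a simplex; then the facet of the simplex opposite to the vertex `p i`
is mapped into `A i`, so it suffices that the images of the facets have a common point. Otherwise
their complements cover the compact image of the cube, and a refinement of multiplicity at most
`n + 1` pulls back to an open cover of the cube, indexed by the facets, in which every set misses
its facet and not all sets meet. This contradicts the Knaster–Kuratowski–Mazurkiewicz lemma, which
follows from Sperner's lemma: a labelling of a cubical grid induces, by coning, a mod 2 chain map to
the simplex of labels, and the boundary condition forces the image of the subdivided cube to be the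
top simplex.
-/

open Finset

theorem sum_sum_erase_eq_zero_of_symm {ι M : Type*} [DecidableEq ι] [AddCommGroup M]
    [Module (ZMod 2) M] (s : Finset ι) (f : ι → ι → M) (hf : ∀ i j, f i j = f j i) :
    ∑ i ∈ s, ∑ j ∈ s.erase i, f i j = 0 := by
  rw [sum_sigma']
  refine sum_involution (fun p _ => ⟨p.2, p.1⟩) ?_ ?_ ?_ (fun _ _ => rfl)
  · rintro ⟨i, j⟩ -
    exact (congrArg (f i j + ·) (hf j i)).trans (ZModModule.add_self _)
  · rintro ⟨i, j⟩ hij -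
    grind
  · rintro ⟨i, j⟩ hij
    grind

/-- Mod 2 chains on the full simplex with vertex set `L`, a face being the finite set of its
vertices. The empty face is allowed, so the chain complex is augmented. -/
abbrev SimplexChain (L : Type*) := Finset L → ZMod 2

namespace SimplexChain

variable {L : Type*} [DecidableEq L]

/-- The cone with apex `i` over a chain. Faces that already contain `i` contribute `0`. -/
def cone (i : L) : SimplexChain L →+ SimplexChain L where
  toFun c S := if i ∈ S then c (S.erase i) else 0
  map_zero' := by ext S; simp
  map_add' c d := by ext S; simp only [Pi.add_apply]; split_ifs <;> simp

/-- The simplicial boundary of a mod 2 chain. -/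
def boundary [Fintype L] : SimplexChain L →+ SimplexChain L where
  toFun c S := ∑ i ∈ Sᶜ, c (insert i S)
  map_zero' := by ext S; simp
  map_add' c d := by ext S; simp [sum_add_distrib]

theorem cone_apply (i : L) (c : SimplexChain L) (S : Finset L) :
    cone i c S = if i ∈ S then c (S.erase i) else 0 := rfl

theorem cone_single_empty (i : L) :
    cone i (Pi.single ∅ 1 : SimplexChain L) = Pi.single {i} 1 := by
  ext S
  simp only [cone_apply, Pi.single_apply, erase_eq_empty_iff]
  grind

variable [Fintype L]

theorem boundary_apply (c : SimplexChain L) (S : Finset L) :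
    boundary c S = ∑ i ∈ Sᶜ, c (insert i S) := rfl

theorem boundary_single_empty : boundary (Pi.single ∅ 1 : SimplexChain L) = 0 := by
  ext S
  simp [boundary_apply]

theorem boundary_cone (i : L) (c : SimplexChain L) :
    boundary (cone i c) = c + cone i (boundary c) := by
  ext S
  simp only [Pi.add_apply, boundary_apply, cone_apply]
  by_cases hi : i ∈ S
  · have apex_mem (j : L) : i ∈ insert j S := mem_insert_of_mem hi
    simp only [apex_mem, hi, if_true, compl_erase]
    rw [sum_insert (by simp [hi]), insert_erase hi, ← add_assoc, CharTwo.add_self_eq_zero,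
      zero_add]
    refine sum_congr rfl fun j hj => ?_
    rw [erase_insert_of_ne (by grind [mem_compl])]
  · simp only [hi, mem_insert, or_false, if_false, add_zero]
    simp [hi]

end SimplexChain

open SimplexChain

section LabelledGrid

variable {ι L : Type*} [DecidableEq ι] [DecidableEq L] (l : (ι → ℕ) → L)

/-- The label chain of the unit cube in `ι → ℕ` with lowest corner `a` and edge directions `J`,
for a labelling `l` of the grid: the cone with apex `l a` over the label chains of the facets. This
is an augmented chain map from cubical chains to chains on the simplex of labels. -/
noncomputable def cubeChain (a : ι → ℕ) (J : Finset ι) : SimplexChain L :=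
  cone (l a) <| if J = ∅ then Pi.single ∅ 1 else
    ∑ j : J, (cubeChain a (J.erase j) + cubeChain (a + Pi.single j.1 1) (J.erase j))
termination_by #J
decreasing_by all_goals exact card_erase_lt_of_mem j.2

/-- The sum of the label chains of the facets of a cube. A `0`-dimensional cube has the empty face
as its only facet. -/
noncomputable def facetChain (a : ι → ℕ) (J : Finset ι) : SimplexChain L :=
  if J = ∅ then Pi.single ∅ 1 else
    ∑ j ∈ J, (cubeChain l a (J.erase j) + cubeChain l (a + Pi.single j 1) (J.erase j))

theorem cubeChain_eq_cone (a : ι → ℕ) (J : Finset ι) :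
    cubeChain l a J = cone (l a) (facetChain l a J) := by
  rw [cubeChain, facetChain, ← sum_coe_sort J]

theorem facetChain_empty (a : ι → ℕ) : facetChain l a ∅ = Pi.single ∅ 1 := if_pos rfl

theorem facetChain_of_nonempty (a : ι → ℕ) {J : Finset ι} (hJ : J.Nonempty) :
    facetChain l a J =
      ∑ j ∈ J, (cubeChain l a (J.erase j) + cubeChain l (a + Pi.single j 1) (J.erase j)) :=
  if_neg hJ.ne_empty

theorem sum_facetChain_erase (a : ι → ℕ) {J : Finset ι} (hJ : J.Nonempty) :
    ∑ j ∈ J, (facetChain l a (J.erase j) + facetChain l (a + Pi.single j 1) (J.erase j)) = 0 := by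
  obtain ⟨j, rfl⟩ | hJ := hJ.exists_eq_singleton_or_nontrivial
  · simp [facetChain_empty, ZModModule.add_self]
  simp only [facetChain_of_nonempty l _ hJ.erase_nonempty, ← sum_add_distrib]
  refine sum_sum_erase_eq_zero_of_symm J _ fun i j => ?_
  rw [erase_right_comm, add_right_comm a (Pi.single i 1)]
  abel

theorem boundary_cubeChain [Fintype L] (a : ι → ℕ) (J : Finset ι) :
    boundary (cubeChain l a J) = facetChain l a J := by
  induction J using Finset.strongInduction generalizing a with
  | H J ih =>
    suffices boundary_facetChain : boundary (facetChain l a J) = 0 by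
      rw [cubeChain_eq_cone, boundary_cone, boundary_facetChain, map_zero, add_zero]
    obtain rfl | hJ := J.eq_empty_or_nonempty
    · rw [facetChain_empty, boundary_single_empty]
    rw [facetChain_of_nonempty l a hJ, map_sum, ← sum_facetChain_erase l a hJ]
    refine sum_congr rfl fun j hj => ?_
    rw [map_add, ih _ (erase_ssubset hj), ih _ (erase_ssubset hj)]

/-- The vertex of the unit cube with lowest corner `a` reached by moving along the edges in the
directions `I`. -/
def cubeVertex (a : ι → ℕ) (I : Finset ι) : ι → ℕ := a + ∑ j ∈ I, Pi.single j 1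

theorem cubeVertex_apply (a : ι → ℕ) (I : Finset ι) (j : ι) :
    cubeVertex a I j = a j + if j ∈ I then 1 else 0 := by
  simp [cubeVertex, Finset.sum_pi_single]

theorem cubeVertex_empty (a : ι → ℕ) : cubeVertex a ∅ = a := by simp [cubeVertex]

theorem cubeVertex_add_single (a : ι → ℕ) {j : ι} {I : Finset ι} (hj : j ∉ I) :
    cubeVertex (a + Pi.single j 1) I = cubeVertex a (insert j I) := by
  rw [cubeVertex, cubeVertex, sum_insert hj, add_assoc]

theorem exists_label_cubeVertex_eq_of_cubeChain_ne_zero {a : ι → ℕ} {J : Finset ι}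
    {S : Finset L} (hS : cubeChain l a J S ≠ 0) {i : L} (hi : i ∈ S) :
    ∃ I ⊆ J, l (cubeVertex a I) = i := by
  induction J using Finset.strongInduction generalizing a S with
  | H J ih =>
    by_cases hai : l a = i
    · exact ⟨∅, empty_subset J, by rwa [cubeVertex_empty]⟩
    rw [cubeChain_eq_cone, cone_apply] at hS
    have facet_ne_zero : facetChain l a J (S.erase (l a)) ≠ 0 := fun h => hS (by simp [h])
    have hi_erase : i ∈ S.erase (l a) := mem_erase.2 ⟨Ne.symm hai, hi⟩
    obtain rfl | hJ := J.eq_empty_or_nonempty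
    · simp [facetChain_empty, ne_empty_of_mem hi_erase] at facet_ne_zero
    rw [facetChain_of_nonempty l a hJ, Finset.sum_apply] at facet_ne_zero
    obtain ⟨j, hj, hjS⟩ := exists_ne_zero_of_sum_ne_zero facet_ne_zero
    by_cases near : cubeChain l a (J.erase j) (S.erase (l a)) = 0
    · rw [Pi.add_apply, near, zero_add] at hjS
      obtain ⟨I, hI, hIi⟩ := ih _ (erase_ssubset hj) hjS hi_erase
      rw [cubeVertex_add_single a (by grind)] at hIi
      exact ⟨insert j I, by grind, hIi⟩
    · obtain ⟨I, hI, hIi⟩ := ih _ (erase_ssubset hj) near hi_erase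
      exact ⟨I, hI.trans (erase_subset j J), hIi⟩

theorem cubeChain_apply_eq_zero {a : ι → ℕ} {J : Finset ι} {S : Finset L} {i : L} (hi : i ∈ S)
    (h : ∀ I ⊆ J, l (cubeVertex a I) ≠ i) : cubeChain l a J S = 0 := by
  by_contra hne
  obtain ⟨I, hI, hIi⟩ := exists_label_cubeVertex_eq_of_cubeChain_ne_zero l hne hi
  exact h I hI hIi

section FaceGrid

variable [Fintype ι]

/-- The lattice points of `∏ j ∈ J, [0, k)`, a face of the cube `[0, k) ^ ι`: the coordinates
outside `J` are `0`. -/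
def faceGrid (k : ℕ) (J : Finset ι) : Finset (ι → ℕ) :=
  Fintype.piFinset fun j => if j ∈ J then range k else {0}

theorem mem_faceGrid {k : ℕ} {J : Finset ι} {a : ι → ℕ} :
    a ∈ faceGrid k J ↔ (∀ j ∈ J, a j < k) ∧ ∀ j ∉ J, a j = 0 := by
  simp only [faceGrid, Fintype.mem_piFinset]
  grind

theorem sum_faceGrid_eq_sum_erase {M : Type*} [AddCommMonoid M] (k : ℕ) {J : Finset ι} {j : ι}
    (hj : j ∈ J) (f : (ι → ℕ) → M) :
    ∑ a ∈ faceGrid k J, f a =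
      ∑ b ∈ faceGrid k (J.erase j), ∑ m ∈ range k, f (b + Pi.single j m) := by
  rw [← sum_product']
  have update_add_single (a : ι → ℕ) : Function.update a j 0 + Pi.single j (a j) = a := by
    ext x
    grind [Pi.add_apply]
  have update_single_add (b : ι → ℕ) (hb : b ∈ faceGrid k (J.erase j)) (m : ℕ) :
      Function.update (b + Pi.single j m) j 0 = b := by
    ext x
    grind [mem_faceGrid, Pi.add_apply]
  refine sum_nbij' (fun a => (Function.update a j 0, a j)) (fun p => p.1 + Pi.single j p.2)
    ?_ ?_ ?_ ?_ ?_
  all_goals grind [mem_faceGrid, Pi.add_apply]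

theorem sum_faceGrid_add_shift {M : Type*} [AddCommGroup M] [Module (ZMod 2) M] (k : ℕ)
    {J : Finset ι} {j : ι} (hj : j ∈ J) (f : (ι → ℕ) → M) :
    ∑ a ∈ faceGrid k J, (f a + f (a + Pi.single j 1)) =
      ∑ b ∈ faceGrid k (J.erase j), (f b + f (b + Pi.single j k)) := by
  rw [sum_faceGrid_eq_sum_erase k hj]
  refine sum_congr rfl fun b _ => ?_
  have telescope := sum_range_sub (fun m => f (b + Pi.single j m)) k
  simp only [ZModModule.sub_eq_add, Pi.single_zero, add_zero] at telescope
  simp only [add_assoc b, ← Pi.single_add]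
  rw [add_comm (f b), ← telescope]
  exact sum_congr rfl fun m _ => add_comm _ _

/-- The label chain of the `k`-fold subdivided face of `[0, k] ^ ι` with edge directions `J`. -/
noncomputable def faceChain (k : ℕ) (J : Finset ι) : SimplexChain L :=
  ∑ a ∈ faceGrid k J, cubeChain l a J

theorem faceChain_empty (k : ℕ) : faceChain l k ∅ = Pi.single {l 0} 1 := by
  have faceGrid_empty : faceGrid k (∅ : Finset ι) = {0} := by
    ext a
    simp [mem_faceGrid, funext_iff]
  rw [faceChain, faceGrid_empty, sum_singleton, cubeChain_eq_cone, facetChain_empty,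
    cone_single_empty]

/-- The facets interior to the subdivided face cancel in pairs. -/
theorem boundary_faceChain [Fintype L] (k : ℕ) {J : Finset ι} (hJ : J.Nonempty) :
    boundary (faceChain l k J) = ∑ j ∈ J, ∑ b ∈ faceGrid k (J.erase j),
      (cubeChain l b (J.erase j) + cubeChain l (b + Pi.single j k) (J.erase j)) := by
  simp only [faceChain, map_sum, boundary_cubeChain, facetChain_of_nonempty l _ hJ]
  rw [sum_comm]
  exact sum_congr rfl fun j hj => sum_faceGrid_add_shift k hj fun a => cubeChain l a (J.erase j)

end FaceGrid

end LabelledGrid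

section Sperner

variable {ι : Type*} [DecidableEq ι] {l : (ι → ℕ) → Option ι} {k : ℕ}

theorem cubeChain_add_single_apply_eq_zero_of_none_mem (hl : ∀ v j, v j = k → l v ≠ none)
    {J : Finset ι} {j : ι} {b : ι → ℕ} (hb : b j = 0) (hj : j ∉ J) {S : Finset (Option ι)}
    (hS : none ∈ S) : cubeChain l (b + Pi.single j k) J S = 0 := by
  refine cubeChain_apply_eq_zero l hS fun I hI => hl _ j ?_
  rw [cubeVertex_apply, if_neg fun h => hj (hI h)]
  simp [hb]

variable [Fintype ι]

theorem cubeChain_apply_eq_zero_of_some_mem (hl : ∀ v j, v j = 0 → l v ≠ some j)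
    {J : Finset ι} {a : ι → ℕ} (ha : a ∈ faceGrid k J) {j : ι} (hj : j ∉ J)
    {S : Finset (Option ι)} (hjS : some j ∈ S) : cubeChain l a J S = 0 := by
  refine cubeChain_apply_eq_zero l hjS fun I hI => hl _ j ?_
  rw [cubeVertex_apply, (mem_faceGrid.1 ha).2 j hj, if_neg fun h => hj (hI h)]

theorem faceChain_apply_eq_zero_of_some_mem (hl : ∀ v j, v j = 0 → l v ≠ some j)
    {J : Finset ι} {j : ι} (hj : j ∉ J) {S : Finset (Option ι)} (hjS : some j ∈ S) :
    faceChain l k J S = 0 := by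
  rw [faceChain, Finset.sum_apply]
  exact sum_eq_zero fun a ha => cubeChain_apply_eq_zero_of_some_mem hl ha hj hjS

theorem boundary_faceChain_insert_apply_insertNone (hl_zero : ∀ v j, v j = 0 → l v ≠ some j)
    (hl_top : ∀ v j, v j = k → l v ≠ none) {J : Finset ι} {j : ι} (hj : j ∉ J) :
    boundary (faceChain l k (insert j J)) (insertNone J) = faceChain l k J (insertNone J) := by
  have far {i : ι} {K : Finset ι} (hi : i ∉ K) {b : ι → ℕ} (hb : b ∈ faceGrid k K) :
      cubeChain l (b + Pi.single i k) K (insertNone J) = 0 :=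
    cubeChain_add_single_apply_eq_zero_of_none_mem hl_top ((mem_faceGrid.1 hb).2 i hi) hi
      none_mem_insertNone
  have near {i : ι} (hi : i ∈ J) {K : Finset ι} (hiK : i ∉ K) {b : ι → ℕ}
      (hb : b ∈ faceGrid k K) : cubeChain l b K (insertNone J) = 0 :=
    cubeChain_apply_eq_zero_of_some_mem hl_zero hb hiK (some_mem_insertNone.2 hi)
  rw [boundary_faceChain l k (insert_nonempty j J), Finset.sum_apply, sum_insert hj,
    erase_insert hj, sum_eq_zero (s := J), add_zero, faceChain, Finset.sum_apply, Finset.sum_apply]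
  · exact sum_congr rfl fun b hb => by rw [Pi.add_apply, far hj hb, add_zero]
  · intro i hi
    have hiK : i ∉ (insert j J).erase i := notMem_erase _ _
    rw [Finset.sum_apply]
    exact sum_eq_zero fun b hb => by rw [Pi.add_apply, near hi hiK hb, far hiK hb, add_zero]

theorem faceChain_insert_apply_insertNone (hl : ∀ v j, v j = 0 → l v ≠ some j)
    {J : Finset ι} {j : ι} (hj : j ∉ J) :
    faceChain l k (insert j J) (insertNone (insert j J)) =
      boundary (faceChain l k (insert j J)) (insertNone J) := by
  have insert_some : insert (some j) (insertNone J) = insertNone (insert j J) := by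
    ext (_ | x) <;> simp
  rw [boundary_apply, sum_eq_single_of_mem (some j) (by simpa using hj), insert_some]
  rintro (_ | i) hi hij
  · simp at hi
  · have hiJ : i ∉ insert j J := by grind [mem_compl, some_mem_insertNone]
    exact faceChain_apply_eq_zero_of_some_mem hl hiJ (mem_insert_self _ _)

theorem faceChain_apply_insertNone (hl_zero : ∀ v j, v j = 0 → l v ≠ some j)
    (hl_top : ∀ v j, v j = k → l v ≠ none) (J : Finset ι) :
    faceChain l k J (insertNone J) = 1 := by
  induction J using Finset.induction_on with
  | empty =>
    have l_zero : l 0 = none := Option.eq_none_iff_forall_ne_some.2 fun j => hl_zero 0 j rfl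
    rw [faceChain_empty, l_zero]
    exact Pi.single_eq_same _ _
  | insert j J hj ih =>
    rw [faceChain_insert_apply_insertNone hl_zero hj,
      boundary_faceChain_insert_apply_insertNone hl_zero hl_top hj, ih]

end Sperner

theorem exists_cube_forall_exists_label_eq {ι : Type*} [DecidableEq ι] [Finite ι]
    {l : (ι → ℕ) → Option ι} {k : ℕ} (hl_zero : ∀ v j, v j = 0 → l v ≠ some j)
    (hl_top : ∀ v j, v j = k → l v ≠ none) :
    ∃ a : ι → ℕ, ∀ i, ∃ I, l (cubeVertex a I) = i := by
  have := Fintype.ofFinite ι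
  have faceChain_univ := faceChain_apply_insertNone hl_zero hl_top univ
  rw [faceChain, Finset.sum_apply] at faceChain_univ
  obtain ⟨a, -, ha⟩ := exists_ne_zero_of_sum_ne_zero (faceChain_univ ▸ one_ne_zero)
  refine ⟨a, fun i => ?_⟩
  obtain ⟨I, -, hI⟩ := exists_label_cubeVertex_eq_of_cubeChain_ne_zero l ha (i := i) (by simp)
  exact ⟨I, hI⟩

section Cube

open unitInterval

/-- The lattice point `v` scaled by `1 / k`, with coordinates clamped to the unit interval. -/
noncomputable def gridPoint {ι : Type*} (k : ℕ) (v : ι → ℕ) : ι → I :=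
  fun j => Set.projIcc 0 1 zero_le_one (v j / k : ℝ)

section GridPoint

variable {ι : Type*} {k : ℕ} {v : ι → ℕ} {j : ι}

theorem gridPoint_apply_of_eq_zero (hj : v j = 0) : gridPoint k v j = 0 := by
  simp [gridPoint, hj]

theorem gridPoint_apply_of_eq (hk : k ≠ 0) (hj : v j = k) : gridPoint k v j = 1 := by
  simp [gridPoint, hj, hk]

theorem dist_gridPoint_cubeVertex_le [DecidableEq ι] [Fintype ι] (k : ℕ) (a : ι → ℕ)
    (K : Finset ι) : dist (gridPoint k (cubeVertex a K)) (gridPoint k a) ≤ 1 / k := by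
  refine (dist_pi_le_iff (by positivity)).2 fun j => ?_
  calc dist (gridPoint k (cubeVertex a K) j) (gridPoint k a j)
      ≤ dist (cubeVertex a K j / k : ℝ) (a j / k) := by
        simpa [gridPoint] using (LipschitzWith.projIcc (zero_le_one (α := ℝ))).dist_le_mul
          (cubeVertex a K j / k) (a j / k)
    _ = (if j ∈ K then 1 else 0) / k := by
        rw [cubeVertex_apply, Real.dist_eq, ← sub_div]
        push_cast
        rw [add_sub_cancel_left, abs_of_nonneg (by positivity)]
    _ ≤ 1 / k := by
        gcongr
        split_ifs <;> norm_num

end GridPoint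

/-- The faces `t j = 0` of the cube, indexed by `some j`, and, indexed by `none`, the union of the
opposite faces. Collapsing the cube to a simplex, these are the facets of the simplex. -/
def cubeFacet {ι : Type*} : Option ι → Set (ι → I)
  | none => {t | ∃ j, t j = 1}
  | some j => {t | t j = 0}

theorem isClosed_cubeFacet {ι : Type*} [Finite ι] (i : Option ι) :
    IsClosed (cubeFacet i) := by
  cases i with
  | none =>
    simp only [cubeFacet, Set.ofPred_exists]
    exact isClosed_iUnion_of_finite fun j => isClosed_eq (continuous_apply j) continuous_const
  | some j => exact isClosed_eq (continuous_apply j) continuous_const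

/-- A form of the Knaster–Kuratowski–Mazurkiewicz lemma. -/
theorem nonempty_iInter_of_isOpen_of_disjoint_cubeFacet {ι : Type*} [Finite ι]
    {U : Option ι → Set (ι → I)} (hU : ∀ i, IsOpen (U i)) (hcover : ⋃ i, U i = Set.univ)
    (hdisj : ∀ i, Disjoint (U i) (cubeFacet i)) : (⋂ i, U i).Nonempty := by
  classical
  have := Fintype.ofFinite ι
  obtain ⟨δ, hδ, hball⟩ := lebesgue_number_lemma_of_metric isCompact_univ hU hcover.ge
  obtain ⟨k, hk⟩ := exists_nat_one_div_lt hδ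
  choose l hl using fun v => hball (gridPoint (k + 1) v) (Set.mem_univ _)
  have gridPoint_notMem {v : ι → ℕ} : gridPoint (k + 1) v ∉ cubeFacet (l v) :=
    (hdisj (l v)).notMem_of_mem_left (hl v (Metric.mem_ball_self hδ))
  have hl_zero (v : ι → ℕ) (j : ι) (hj : v j = 0) : l v ≠ some j := fun hlv =>
    gridPoint_notMem (by rw [hlv]; exact gridPoint_apply_of_eq_zero hj)
  have hl_top (v : ι → ℕ) (j : ι) (hj : v j = k + 1) : l v ≠ none := fun hlv =>
    gridPoint_notMem (by rw [hlv]; exact ⟨j, gridPoint_apply_of_eq k.succ_ne_zero hj⟩)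
  obtain ⟨a, ha⟩ := exists_cube_forall_exists_label_eq hl_zero hl_top
  refine ⟨gridPoint (k + 1) a, Set.mem_iInter.2 fun i => ?_⟩
  obtain ⟨K, rfl⟩ := ha i
  refine hl _ (Metric.mem_ball'.2 ((dist_gridPoint_cubeVertex_le (k + 1) a K).trans_lt ?_))
  exact_mod_cast hk

theorem CompactTopDimLE.exists_shrinking {X : Type} [TopologicalSpace X] {n : ℕ}
    (hdim : CompactTopDimLE X n) {K : Set X} (hK : IsCompact K) {ι : Type} {U : ι → Set X}
    (hU : ∀ i, IsOpen (U i)) (hcover : K ⊆ ⋃ i, U i) :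
    ∃ W : ι → Set X, (∀ i, IsOpen (W i)) ∧ (∀ i, W i ⊆ U i) ∧ K ⊆ ⋃ i, W i ∧
      ∀ x ∈ K, {i | x ∈ W i}.encard ≤ n + 1 := by
  obtain ⟨κ, V, V_open, V_cover, V_refines, V_mult⟩ := hdim K hK ι U hU hcover
  choose φ hφ using V_refines
  refine ⟨fun i => ⋃ j ∈ φ ⁻¹' {i}, V j, fun i => isOpen_biUnion fun j _ => V_open j,
    fun i => Set.iUnion₂_subset fun j hj => (hφ j).trans_eq (congrArg U hj),
    fun x hx => ?_, fun x hx => ?_⟩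
  · obtain ⟨j, hj⟩ := Set.mem_iUnion.1 (V_cover hx)
    exact Set.mem_iUnion.2 ⟨φ j, Set.mem_biUnion rfl hj⟩
  · obtain ⟨s, hs, hsV⟩ := V_mult x hx
    have hsub : {i | x ∈ ⋃ j ∈ φ ⁻¹' {i}, V j} ⊆ φ '' s := fun i hi => by
      obtain ⟨j, hji, hj⟩ := Set.mem_iUnion₂.1 hi
      exact ⟨j, hsV j hj, hji⟩
    calc {i | x ∈ ⋃ j ∈ φ ⁻¹' {i}, V j}.encard
        ≤ (φ '' s).encard := Set.encard_le_encard hsub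
      _ ≤ (s : Set κ).encard := Set.encard_image_le φ s
      _ ≤ n + 1 := by
        rw [Set.encard_coe_eq_coe_finsetCard]
        exact_mod_cast hs

theorem CompactTopDimLE.nonempty_iInter_image_cubeFacet {X : Type} [TopologicalSpace X]
    [T2Space X] {n : ℕ} (hdim : CompactTopDimLE X n) {ι : Type} [Finite ι] (hn : n < Nat.card ι)
    {f : (ι → I) → X} (hf : Continuous f) : (⋂ i, f '' cubeFacet i).Nonempty := by
  by_contra hempty
  have cover : Set.range f ⊆ ⋃ i, (f '' cubeFacet i)ᶜ := by
    rw [← Set.compl_iInter, Set.not_nonempty_iff_eq_empty.1 hempty, Set.compl_empty]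
    exact Set.subset_univ _
  have isOpen_compl_image (i : Option ι) : IsOpen (f '' cubeFacet i)ᶜ :=
    ((isClosed_cubeFacet i).isCompact.image hf).isClosed.isOpen_compl
  obtain ⟨W, W_open, W_sub, W_cover, W_mult⟩ :=
    hdim.exists_shrinking (isCompact_range hf) isOpen_compl_image cover
  obtain ⟨t, ht⟩ : (⋂ i, f ⁻¹' W i).Nonempty := by
    refine nonempty_iInter_of_isOpen_of_disjoint_cubeFacet (fun i => (W_open i).preimage hf) ?_ ?_
    · rw [← Set.preimage_iUnion, Set.preimage_eq_univ_iff]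
      exact W_cover
    · exact fun i => Set.disjoint_left.2 fun t htW htF => W_sub i htW ⟨t, htF, rfl⟩
  have mem_all : {i | f t ∈ W i} = Set.univ := Set.eq_univ_of_forall fun i =>
    Set.mem_iInter.1 ht i
  have card_le := W_mult (f t) (Set.mem_range_self t)
  rw [mem_all, Set.encard_univ, ENat.card_eq_coe_natCard, Finite.card_option] at card_le
  have : Nat.card ι + 1 ≤ n + 1 := by exact_mod_cast card_le
  omega

end Cube

section Helly

open unitInterval

/-- Convexity with respect to a choice `γ x y` of a path between any two points `x`, `y`. -/
def IsConvexFor {X : Type*} (γ : X → X → I → X) (A : Set X) : Prop :=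
  ∀ x ∈ A, ∀ y ∈ A, ∀ t, γ x y t ∈ A

/-- The iterated join of a point `q` and the points `p j`: starting from `q`, move towards `p j` by
the proportion `t j`, for all `j` in the list (from its end to its head). -/
def iteratedJoin {X ι : Type*} (γ : X → X → I → X) (q : X) (p : ι → X) (s : List ι)
    (t : ι → I) : X :=
  s.foldr (fun j x => γ x (p j) (t j)) q

section IteratedJoin

variable {X ι : Type*} {γ : X → X → I → X} {q : X} {p : ι → X} {s : List ι} {t : ι → I} {A : Set X}

theorem continuous_iteratedJoin [TopologicalSpace X]
    (hγ : Continuous fun z : X × X × I => γ z.1 z.2.1 z.2.2) (q : X) (p : ι → X) (s : List ι) :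
    Continuous (iteratedJoin γ q p s) := by
  induction s with
  | nil => exact continuous_const
  | cons j s ih =>
    exact hγ.comp (ih.prodMk (continuous_const.prodMk (continuous_apply j)))

theorem IsConvexFor.iteratedJoin_mem (hA : IsConvexFor γ A) (hγ_zero : ∀ x y, γ x y 0 = x)
    (hq : q ∈ A) (hp : ∀ j ∈ s, t j ≠ 0 → p j ∈ A) : iteratedJoin γ q p s t ∈ A := by
  induction s with
  | nil => exact hq
  | cons j s ih =>
    have hs := ih fun i hi => hp i (List.mem_cons_of_mem j hi)
    change γ (iteratedJoin γ q p s t) (p j) (t j) ∈ A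
    by_cases htj : t j = 0
    · rwa [htj, hγ_zero]
    · exact hA _ hs _ (hp j List.mem_cons_self htj) _

theorem IsConvexFor.iteratedJoin_mem_of_eq_one (hA : IsConvexFor γ A)
    (hγ_one : ∀ x y, γ x y 1 = y) (hp : ∀ j, p j ∈ A) {j : ι} (hj : j ∈ s) (htj : t j = 1) :
    iteratedJoin γ q p s t ∈ A := by
  induction s with
  | nil => simp at hj
  | cons i s ih =>
    change γ (iteratedJoin γ q p s t) (p i) (t i) ∈ A
    by_cases hij : i = j
    · rw [hij, htj, hγ_one]
      exact hp j
    · exact hA _ (ih ((List.mem_cons.1 hj).resolve_left (Ne.symm hij))) _ (hp i) _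

end IteratedJoin

variable {X : Type} [TopologicalSpace X] [T2Space X] {γ : X → X → I → X} {n : ℕ}

theorem CompactTopDimLE.nonempty_iInter_option_of_isConvexFor
    (hdim : CompactTopDimLE X n) (hγ : Continuous fun z : X × X × I => γ z.1 z.2.1 z.2.2)
    (hγ_zero : ∀ x y, γ x y 0 = x) (hγ_one : ∀ x y, γ x y 1 = y)
    {ι : Type} [Finite ι] (hn : n < Nat.card ι) {A : Option ι → Set X}
    (hA : ∀ i, IsConvexFor γ (A i)) {p : Option ι → X} (hp : ∀ i j, i ≠ j → p i ∈ A j) :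
    (⋂ i, A i).Nonempty := by
  have := Fintype.ofFinite ι
  have hf := continuous_iteratedJoin hγ (p none) (fun j => p (some j)) univ.toList
  refine (hdim.nonempty_iInter_image_cubeFacet hn hf).mono (Set.iInter_mono fun i => ?_)
  rintro _ ⟨t, ht, rfl⟩
  cases i with
  | none =>
    obtain ⟨j, hj⟩ := ht
    exact (hA none).iteratedJoin_mem_of_eq_one hγ_one (fun i => hp _ _ (by simp)) (by simp) hj
  | some j =>
    refine (hA (some j)).iteratedJoin_mem hγ_zero (hp _ _ (by simp)) fun i _ hi => hp _ _ ?_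
    rintro ⟨rfl⟩
    exact hi ht

theorem CompactTopDimLE.nonempty_biInter_of_erase
    (hdim : CompactTopDimLE X n) (hγ : Continuous fun z : X × X × I => γ z.1 z.2.1 z.2.2)
    (hγ_zero : ∀ x y, γ x y 0 = x) (hγ_one : ∀ x y, γ x y 1 = y)
    {ι : Type} [DecidableEq ι] {A : ι → Set X} (hA : ∀ i, IsConvexFor γ (A i)) {s : Finset ι}
    (hs : n + 1 < #s) (hinter : ∀ i ∈ s, (⋂ j ∈ s.erase i, A j).Nonempty) :
    (⋂ i ∈ s, A i).Nonempty := by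
  obtain ⟨i₀, hi₀⟩ : s.Nonempty := card_pos.1 (by omega)
  choose p hp using hinter
  let e := Equiv.optionSubtypeNe (⟨i₀, hi₀⟩ : s)
  have card_eq : Nat.card {i : s // i ≠ ⟨i₀, hi₀⟩} + 1 = #s := by
    rw [← Finite.card_option, Nat.card_congr e, Nat.card_eq_fintype_card,
      Fintype.card_coe]
  have p_mem (i j) (hij : i ≠ j) : p (e i) (e i).2 ∈ A (e j) :=
    Set.mem_iInter₂.1 (hp _ (e i).2) _
      (mem_erase.2 ⟨fun h => hij (e.injective (Subtype.ext h)).symm, (e j).2⟩)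
  obtain ⟨x, hx⟩ := hdim.nonempty_iInter_option_of_isConvexFor hγ hγ_zero hγ_one (by omega)
    (fun i => hA (e i)) p_mem
  refine ⟨x, Set.mem_iInter₂.2 fun i hi => ?_⟩
  simpa using Set.mem_iInter.1 hx (e.symm ⟨i, hi⟩)

theorem helly_uniquely_geodesic_general
    (hγ : Continuous fun z : X × X × I => γ z.1 z.2.1 z.2.2)
    (hγ_zero : ∀ x y, γ x y 0 = x) (hγ_one : ∀ x y, γ x y 1 = y)
    (hdim : CompactTopDimLE X n) {ι : Type} [Finite ι] {A : ι → Set X}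
    (hA : ∀ i, IsConvexFor γ (A i))
    (hinter : ∀ s : Finset ι, #s ≤ n + 1 → (⋂ i ∈ s, A i).Nonempty) :
    (⋂ i, A i).Nonempty := by
  classical
  have := Fintype.ofFinite ι
  suffices ∀ s : Finset ι, (⋂ i ∈ s, A i).Nonempty by simpa using this univ
  intro s
  induction s using Finset.strongInduction with
  | H s ih =>
    obtain hs | hs := le_or_gt #s (n + 1)
    · exact hinter s hs
    · exact hdim.nonempty_biInter_of_erase hγ hγ_zero hγ_one hA hs
        fun i hi => ih _ (erase_ssubset hi)

end Helly

/-- Helly's theorem for convex sets in a uniquely geodesic space of compact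
topological dimension at most `n`. -/
theorem helly_uniquely_geodesic {X : Type} [MetricSpace X]
    (γ : X → X → ℝ → X)
    (hγcont : Continuous fun p : X × X × ℝ => γ p.1 p.2.1 p.2.2)
    (hγ0 : ∀ x y : X, γ x y 0 = x)
    (hγ1 : ∀ x y : X, γ x y 1 = y)
    (hγdist : ∀ x y : X, ∀ s ∈ Set.Icc (0:ℝ) 1, ∀ t ∈ Set.Icc (0:ℝ) 1,
      dist (γ x y s) (γ x y t) = |s - t| * dist x y)
    (hγuniq : ∀ x y : X, ∀ φ : ℝ → X,
      (∀ s ∈ Set.Icc (0:ℝ) (dist x y), ∀ t ∈ Set.Icc (0:ℝ) (dist x y),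
        dist (φ s) (φ t) = |s - t|) →
      φ 0 = x → φ (dist x y) = y →
      φ '' Set.Icc (0:ℝ) (dist x y) = (fun t => γ x y t) '' Set.Icc (0:ℝ) 1)
    (n : ℕ) (hdim : CompactTopDimLE X n)
    (m : ℕ) (A : Fin m → Set X)
    (hconv : ∀ i : Fin m, ∀ x ∈ A i, ∀ y ∈ A i, ∀ t ∈ Set.Icc (0:ℝ) 1,
      γ x y t ∈ A i)
    (hinter : ∀ s : Finset (Fin m), s.card ≤ n + 1 → (⋂ i ∈ s, A i).Nonempty) :
    (⋂ i, A i).Nonempty := by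
  have hcont : Continuous fun z : X × X × unitInterval => γ z.1 z.2.1 z.2.2 :=
    hγcont.comp (f := fun z : X × X × unitInterval => (z.1, z.2.1, (z.2.2 : ℝ))) (by fun_prop)
  exact helly_uniquely_geodesic_general hcont hγ0 hγ1 hdim
    (fun i x hx y hy t => hconv i x hx y hy t t.2) hinter
end

section
/- Let X be a contractible Hausdorff topological space of compact topological dimension exactly n < ∞ (in particular, every open cover of every compact subset of X admits an open refinement in which every point belongs to at most n + 1 members). Let A₁, …, A_m be subsets of X, each contractible as a topological subspace, such that the intersection of every subcollection is either contractible (as a subspace) or empty. Suppose m ≥ n + 2 and that for every subset I ⊆ {1, …, m} with |I| = n + 1 the intersection ⋂_{i∈I} A_i is nonempty. Then ⋂_{i=1}^m A_i is nonempty. -/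
/-!
Suppose the conclusion fails and pass to a minimal subfamily with empty intersection, indexed by a
finite set `ι`. The intersection of any proper subfamily of it is nonempty, hence contractible, so
one can build, face by face, a continuous map `F` of the simplex with vertex set `ι` into `X` that
sends the face spanned by `J` into `⋂ i ∉ J, A i`. The facet opposite to the vertex `i` then goes
into `A i`, so the complements of the images of the facets cover the compact image of `F`. Pulling
back a refinement of multiplicity at most `n + 1`, one gets an open cover of the simplex, each
member of which misses a facet, and Lebesgue's covering theorem yields a point lying in `card ι`
members. Therefore `card ι ≤ n + 1`, contradicting the intersection hypothesis.

Lebesgue's covering theorem is Sperner's lemma for arbitrarily fine subdivisions. Working with mod 2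
chains of vertex lists, where repeated vertices are allowed, reduces Sperner's lemma to an algebraic
statement on chain endomorphisms, and iterated barycentric subdivision needs no triangulations.
-/

/-- The space of mod 2 chains spanned by finite lists of vertices in `E`. A list of length `k + 1`
is an ordered, possibly degenerate, `k`-simplex; the empty list is the simplex of dimension `-1`,
so that chains of all dimensions form one augmented complex. -/
abbrev ListChain (E : Type*) := List E →₀ ZMod 2

namespace ListChain

open Finsupp

section Boundary

variable {E F : Type*}

/-- The chains all of whose simplices belong to `S`. -/
abbrev carriedBy (S : Set (List E)) : Submodule (ZMod 2) (ListChain E) :=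
  supported (ZMod 2) (ZMod 2) S

lemma map_mem_of_mem_carriedBy {M : Type*} [AddCommGroup M] [Module (ZMod 2) M]
    {f : ListChain E →ₗ[ZMod 2] M} {S : Set (List E)} {P : Submodule (ZMod 2) M}
    (hf : ∀ l ∈ S, f (single l 1) ∈ P) {c : ListChain E} (hc : c ∈ carriedBy S) : f c ∈ P := by
  have hle : carriedBy S ≤ P.comap f := by
    rw [carriedBy, supported_eq_span_single, Submodule.span_le]
    rintro _ ⟨l, hl, rfl⟩
    exact hf l hl
  exact hle hc

/-- The join of a chain with a vertex `a`, which is placed in front of every simplex. -/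
noncomputable def cone (a : E) : ListChain E →ₗ[ZMod 2] ListChain E :=
  lmapDomain (ZMod 2) (ZMod 2) (List.cons a)

@[simp]
lemma cone_single (a : E) (l : List E) (r : ZMod 2) : cone a (single l r) = single (a :: l) r := by
  simp [cone]

lemma cone_mem_carriedBy {S T : Set (List E)} {a : E} (h : ∀ l ∈ S, a :: l ∈ T)
    {c : ListChain E} (hc : c ∈ carriedBy S) : cone a c ∈ carriedBy T :=
  map_mem_of_mem_carriedBy (fun l hl ↦ by simpa using single_mem_supported _ _ (h l hl)) hc

/-- The chain map induced by a map of vertices. -/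
noncomputable def map (f : E → F) : ListChain E →ₗ[ZMod 2] ListChain F :=
  lmapDomain (ZMod 2) (ZMod 2) (List.map f)

@[simp]
lemma map_single (f : E → F) (l : List E) (r : ZMod 2) :
    map f (single l r) = single (l.map f) r := by
  simp [map]

/-- The simplicial boundary, the sum of the facets of a simplex. -/
noncomputable def boundary : ListChain E →ₗ[ZMod 2] ListChain E :=
  linearCombination (ZMod 2) fun l ↦ ∑ i : Fin l.length, single (l.eraseIdx i) 1

lemma boundary_single (l : List E) :
    boundary (single l 1) = ∑ i : Fin l.length, single (l.eraseIdx i) 1 := by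
  simp [boundary]

lemma boundary_cone (a : E) (c : ListChain E) :
    boundary (cone a c) = c + cone a (boundary c) := by
  have h : boundary ∘ₗ cone a = LinearMap.id + cone a ∘ₗ boundary := by
    ext l : 2
    simp [boundary_single, Fin.sum_univ_succ]
  exact LinearMap.congr_fun h c

lemma boundary_map (f : E → F) (c : ListChain E) : boundary (map f c) = map f (boundary c) := by
  have h : boundary ∘ₗ map f = map f ∘ₗ boundary := by
    ext l : 2
    simp only [LinearMap.comp_apply, lsingle_apply, map_single, boundary_single, map_sum,
      List.eraseIdx_map]
    exact Fintype.sum_equiv (finCongr (by simp)) _ _ (by simp)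
  exact LinearMap.congr_fun h c

lemma boundary_boundary_single (l : List E) : boundary (boundary (single l 1)) = 0 := by
  induction l with
  | nil => simp [boundary_single]
  | cons a l ih =>
    rw [← cone_single, boundary_cone, map_add, boundary_cone, ih, map_zero, add_zero,
      ZModModule.add_self]

end Boundary

section Subdivision

variable {E : Type*} (β : List E → E)

/-- The barycentric subdivision of a single simplex `l`, with `β l` in the role of the barycenter:
the cone with apex `β l` over the subdivision of the boundary of `l`. -/
noncomputable def subdivideSimplex : List E → ListChain E
  | [] => single [] 1
  | a :: l => cone (β (a :: l))
      (∑ i : Fin (a :: l).length, subdivideSimplex ((a :: l).eraseIdx i))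
  termination_by l => l.length
  decreasing_by grind

/-- The linear extension of `subdivideSimplex` to chains. -/
noncomputable def subdivide : ListChain E →ₗ[ZMod 2] ListChain E :=
  linearCombination (ZMod 2) (subdivideSimplex β)

@[simp]
lemma subdivide_single_nil : subdivide β (single [] 1) = single [] 1 := by
  simp [subdivide, subdivideSimplex]

lemma subdivide_single_of_ne_nil {l : List E} (hl : l ≠ []) :
    subdivide β (single l 1) = cone (β l) (subdivide β (boundary (single l 1))) := by
  cases l with
  | nil => contradiction
  | cons a l =>
    simp only [boundary_single, subdivide, linearCombination_single, one_smul, map_sum]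
    rw [subdivideSimplex, map_sum]

lemma boundary_subdivide_single (l : List E) :
    boundary (subdivide β (single l 1)) = subdivide β (boundary (single l 1)) := by
  induction hn : l.length using Nat.strong_induction_on generalizing l with
  | _ n ih =>
  rcases eq_or_ne l [] with rfl | hl
  · simp [boundary_single]
  have hcycle : boundary (subdivide β (boundary (single l 1))) = 0 := by
    calc boundary (subdivide β (boundary (single l 1)))
        = subdivide β (boundary (boundary (single l 1))) := by
          simp only [boundary_single l, map_sum]
          refine Finset.sum_congr rfl fun i _ ↦ ih _ ?_ _ rfl
          grind
      _ = 0 := by rw [boundary_boundary_single, map_zero]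
  rw [subdivide_single_of_ne_nil β hl, boundary_cone, hcycle, map_zero, add_zero]

lemma commute_boundary_subdivide :
    Commute (boundary : Module.End (ZMod 2) (ListChain E)) (subdivide β) := by
  ext l : 2
  exact boundary_subdivide_single β l

end Subdivision

section Enumerations

variable {ι : Type*} [DecidableEq ι]

/-- The number modulo 2 of simplices of a chain that list every element of `T` exactly once. -/
noncomputable def enumCount (T : Finset ι) : ListChain ι →ₗ[ZMod 2] ZMod 2 :=
  linearCombination (ZMod 2) fun l ↦ if (l : Multiset ι) = T.val then 1 else 0

lemma enumCount_single (T : Finset ι) (l : List ι) :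
    enumCount T (single l 1) = if (l : Multiset ι) = T.val then 1 else 0 := by
  simp [enumCount]

lemma exists_coe_eq_val_of_enumCount_ne_zero {T : Finset ι} {S : Set (List ι)} {c : ListChain ι}
    (hc : c ∈ carriedBy S) (hcount : enumCount T c ≠ 0) : ∃ l ∈ S, (l : Multiset ι) = T.val := by
  contrapose! hcount
  refine (Submodule.mem_bot (ZMod 2)).1 (map_mem_of_mem_carriedBy (fun l hl ↦ ?_) hc)
  rw [Submodule.mem_bot, enumCount_single, if_neg (hcount l hl)]

lemma coe_cons_eq_val_iff {T : Finset ι} {a : ι} {l : List ι} :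
    ((a :: l : List ι) : Multiset ι) = T.val ↔ a ∈ T ∧ (l : Multiset ι) = (T.erase a).val := by
  rw [← Multiset.cons_coe, Finset.erase_val]
  constructor
  · intro h
    exact ⟨by rw [← Finset.mem_val, ← h]; exact Multiset.mem_cons_self a _, by simp [← h]⟩
  · rintro ⟨ha, h⟩
    rw [h, Multiset.cons_erase ha]

lemma enumCount_cone (T : Finset ι) (a : ι) (c : ListChain ι) :
    enumCount T (cone a c) = if a ∈ T then enumCount (T.erase a) c else 0 := by
  have h : enumCount T ∘ₗ cone a = if a ∈ T then enumCount (T.erase a) else 0 := by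
    ext l
    split_ifs with ha <;> simp [enumCount_single, coe_cons_eq_val_iff, ha, -Finset.erase_val]
  have := LinearMap.congr_fun h c
  split_ifs at this ⊢ <;> exact this

lemma enumCount_boundary_single [Fintype ι] (T : Finset ι) (l : List ι) :
    enumCount T (boundary (single l 1)) = ∑ i ∈ Tᶜ, enumCount (insert i T) (single l 1) := by
  induction l generalizing T with
  | nil =>
    simp [boundary_single, enumCount_single, eq_comm (a := (0 : Multiset ι)), -Finset.insert_val]
  | cons a l ih =>
    rw [← cone_single, boundary_cone, map_add]
    simp only [enumCount_cone, ih]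
    by_cases ha : a ∈ T
    · have hcompl : (T.erase a)ᶜ = insert a Tᶜ := Finset.compl_erase
      rw [if_pos ha, hcompl, Finset.sum_insert (by simpa using ha), Finset.insert_erase ha,
        ← add_assoc, ZModModule.add_self, zero_add]
      refine Finset.sum_congr rfl fun i hi ↦ ?_
      have hia : i ≠ a := by grind [Finset.mem_compl]
      rw [if_pos (Finset.mem_insert_of_mem ha), Finset.erase_insert_of_ne hia]
    · rw [if_neg ha, add_zero, Finset.sum_eq_single a]
      · rw [if_pos (Finset.mem_insert_self a T), Finset.erase_insert ha]
      · intro i _ hia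
        rw [if_neg (by grind)]
      · simp [ha]

lemma enumCount_boundary [Fintype ι] (T : Finset ι) (c : ListChain ι) :
    enumCount T (boundary c) = ∑ i ∈ Tᶜ, enumCount (insert i T) c := by
  have h : enumCount T ∘ₗ boundary = ∑ i ∈ Tᶜ, enumCount (insert i T) := by
    ext l
    simpa [LinearMap.sum_apply] using enumCount_boundary_single T l
  simpa [LinearMap.sum_apply] using LinearMap.congr_fun h c

-- Sperner's double counting: of the facets of `a :: l`, only `l` contributes to `enumCount`, and of
-- the sets obtained from `l.toFinset` by adding one element, only the one with `a` does.
theorem enumCount_apply_single_eq_one [Finite ι] {φ : ListChain ι →ₗ[ZMod 2] ListChain ι}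
    (hboundary : ∀ c, boundary (φ c) = φ (boundary c)) (hnil : φ (single [] 1) = single [] 1)
    (hcarrier : ∀ l, φ (single l 1) ∈ carriedBy {m | m ⊆ l}) {l : List ι} (hl : l.Nodup) :
    enumCount l.toFinset (φ (single l 1)) = 1 := by
  have := Fintype.ofFinite ι
  induction l with
  | nil => simp [hnil, enumCount_single]
  | cons a l ih =>
    obtain ⟨hal, hl⟩ := List.nodup_cons.1 hl
    have hmissing {i : ι} {m : List ι} {T : Finset ι} (hiT : i ∈ T) (him : i ∉ m) :
        enumCount T (φ (single m 1)) = 0 := by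
      by_contra hcount
      obtain ⟨k, hkm, hkT⟩ := exists_coe_eq_val_of_enumCount_ne_zero (hcarrier m) hcount
      exact him (hkm (by rwa [← Multiset.mem_coe, hkT]))
    have hother_facets :
        enumCount l.toFinset (φ (cone a (boundary (single l 1)))) = 0 := by
      simp only [boundary_single, map_sum, cone_single]
      refine Finset.sum_eq_zero fun i _ ↦ hmissing (i := l[i]) (by simp) ?_
      grind [List.mem_eraseIdx_iff_getElem, List.Nodup.getElem_inj_iff]
    calc enumCount (a :: l).toFinset (φ (single (a :: l) 1))
        = ∑ i ∈ l.toFinsetᶜ, enumCount (insert i l.toFinset) (φ (single (a :: l) 1)) := by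
          rw [List.toFinset_cons, Finset.sum_eq_single a]
          · intro i hi hia
            exact hmissing (Finset.mem_insert_self i _) (by simp_all)
          · simp [hal]
      _ = enumCount l.toFinset (φ (boundary (cone a (single l 1)))) := by
          rw [← enumCount_boundary, hboundary, cone_single]
      _ = enumCount l.toFinset (φ (single l 1)) := by
          rw [boundary_cone, map_add, map_add, hother_facets, add_zero]
      _ = 1 := ih hl

end Enumerations

section SmallSimplices

variable {E : Type*} [PseudoMetricSpace E]

/-- The simplices with at most `k` vertices, all in `C`, and with diameter at most `D`. -/
def smallSimplices (C : Set E) (k : ℕ) (D : ℝ) : Set (List E) :=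
  {l | l.length ≤ k ∧ (∀ p ∈ l, p ∈ C) ∧ ∀ p ∈ l, ∀ q ∈ l, dist p q ≤ D}

lemma cons_mem_smallSimplices {C : Set E} {k : ℕ} {D : ℝ} {a : E} {l : List E} (ha : a ∈ C)
    (hD : 0 ≤ D) (hdist : ∀ p ∈ l, dist p a ≤ D) (hl : l ∈ smallSimplices C k D) :
    a :: l ∈ smallSimplices C (k + 1) D := by
  obtain ⟨hlength, hC, hl⟩ := hl
  refine ⟨by simpa using hlength, by simpa [ha] using hC, ?_⟩
  simp only [List.forall_mem_cons, dist_self]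
  exact ⟨⟨hD, fun p hp ↦ dist_comm a p ▸ hdist p hp⟩, fun p hp ↦ ⟨hdist p hp, hl p hp⟩⟩

end SmallSimplices

section Mesh

variable {E : Type*} [NormedAddCommGroup E] [NormedSpace ℝ E]

/-- The average of the vertices of a simplex, with multiplicity; it is `0` for the empty list. -/
noncomputable def barycenter (l : List E) : E :=
  Finset.univ.centerMass (fun _ : Fin l.length ↦ (1 : ℝ)) l.get

lemma barycenter_mem_convexHull {l : List E} (hl : l ≠ []) :
    barycenter l ∈ convexHull ℝ {p | p ∈ l} :=
  Finset.centerMass_mem_convexHull _ (fun _ _ ↦ zero_le_one)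
    (by simpa using List.length_pos_iff.2 hl) fun i _ ↦ l.get_mem i

lemma sub_barycenter {l : List E} (hl : l ≠ []) (p : E) :
    p - barycenter l = (l.length : ℝ)⁻¹ • ∑ i, (p - l.get i) := by
  have hlength : (l.length : ℝ) ≠ 0 := by simpa using hl
  simp [barycenter, Finset.centerMass, smul_sub, ← Nat.cast_smul_eq_nsmul ℝ, smul_smul, hlength]

lemma dist_barycenter_le {l : List E} {p : E} {D : ℝ} (hp : p ∈ l) (hD : ∀ q ∈ l, dist p q ≤ D) :
    dist p (barycenter l) ≤ (1 - (l.length : ℝ)⁻¹) * D := by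
  obtain ⟨j, rfl⟩ := List.get_of_mem hp
  have hpos : 0 < l.length := List.length_pos_of_mem hp
  have hlength : (0 : ℝ) < l.length := by exact_mod_cast hpos
  have hsum : ‖∑ i, (l.get j - l.get i)‖ ≤ (l.length - 1) * D := by
    rw [← Finset.sum_erase Finset.univ (a := j) (sub_self _)]
    refine (norm_sum_le_of_le _ fun i _ ↦ dist_eq_norm (l.get j) _ ▸ hD _ (l.get_mem i)).trans ?_
    simp [Nat.cast_pred hpos]
  rw [dist_eq_norm, sub_barycenter (List.ne_nil_of_mem hp), norm_smul, norm_inv, Real.norm_natCast]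
  calc (l.length : ℝ)⁻¹ * ‖∑ i, (l.get j - l.get i)‖
      ≤ (l.length : ℝ)⁻¹ * ((l.length - 1) * D) := by gcongr
    _ = (1 - (l.length : ℝ)⁻¹) * D := by
      rw [← mul_assoc, mul_sub, inv_mul_cancel₀ hlength.ne', mul_one]

lemma subdivide_single_mem_carriedBy {K : ℕ} {D : ℝ} {l : List E} (hK : l.length ≤ K)
    (hD : ∀ p ∈ l, ∀ q ∈ l, dist p q ≤ D) :
    subdivide barycenter (single l 1) ∈
      carriedBy (smallSimplices (convexHull ℝ {p | p ∈ l}) l.length ((1 - (K : ℝ)⁻¹) * D)) := by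
  induction hn : l.length generalizing l with
  | zero =>
    obtain rfl := List.length_eq_zero_iff.1 hn
    simpa using single_mem_supported (ZMod 2) (1 : ZMod 2) (by simp [smallSimplices])
  | succ n ih =>
    have hne : l ≠ [] := by grind
    have hD₀ : 0 ≤ D := dist_self (l.head hne) ▸ hD _ (l.head_mem hne) _ (l.head_mem hne)
    have hratio : 1 - (l.length : ℝ)⁻¹ ≤ 1 - (K : ℝ)⁻¹ := by gcongr; simpa using hn ▸ n.succ_pos
    have hball : convexHull ℝ {p | p ∈ l} ⊆
        Metric.closedBall (barycenter l) ((1 - (K : ℝ)⁻¹) * D) :=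
      convexHull_min (fun p hp ↦ (dist_barycenter_le hp (hD p hp)).trans (by gcongr))
        (convex_closedBall _ _)
    have hfacets : subdivide barycenter (boundary (single l 1)) ∈
        carriedBy (smallSimplices (convexHull ℝ {p | p ∈ l}) n ((1 - (K : ℝ)⁻¹) * D)) := by
      rw [boundary_single, map_sum]
      refine Submodule.sum_mem _ fun i _ ↦ supported_mono ?_
        (ih (l := l.eraseIdx i) (by grind) (fun p hp q hq ↦
          hD p (List.mem_of_mem_eraseIdx hp) q (List.mem_of_mem_eraseIdx hq)) (by grind))
      rintro m ⟨hmn, hm, hmD⟩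
      exact ⟨hmn, fun p hp ↦ convexHull_mono (fun q hq ↦ List.mem_of_mem_eraseIdx hq) (hm p hp),
        hmD⟩
    have hbary := barycenter_mem_convexHull hne
    rw [subdivide_single_of_ne_nil _ hne]
    refine cone_mem_carriedBy (fun m hm ↦ cons_mem_smallSimplices hbary ?_ ?_ hm) hfacets
    · exact dist_nonneg.trans (hball hbary)
    · exact fun p hp ↦ hball (hm.2.1 p hp)

lemma subdivide_pow_mem_carriedBy {C : Set E} (hC : Convex ℝ C) {K : ℕ} {D : ℝ} {c : ListChain E}
    (hc : c ∈ carriedBy (smallSimplices C K D)) (N : ℕ) :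
    (subdivide barycenter ^ N) c ∈ carriedBy (smallSimplices C K ((1 - (K : ℝ)⁻¹) ^ N * D)) := by
  induction N with
  | zero => simpa using hc
  | succ N ih =>
    rw [pow_succ', mul_assoc, Module.End.pow_apply, Function.iterate_succ_apply',
      ← Module.End.pow_apply]
    refine map_mem_of_mem_carriedBy (fun l hl ↦ ?_) ih
    obtain ⟨hlength, hlC, hlD⟩ := hl
    refine supported_mono ?_ (subdivide_single_mem_carriedBy hlength hlD)
    rintro m ⟨hml, hm, hmD⟩
    exact ⟨hml.trans hlength, fun p hp ↦ convexHull_min hlC hC (hm p hp), hmD⟩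

end Mesh

end ListChain

section Faces

variable {ι : Type*} [Fintype ι]

/-- The closed face of the standard simplex spanned by the vertices in `J`; it is empty for
`J = ∅`. -/
def stdSimplexFace (J : Finset ι) : Set (ι → ℝ) :=
  {x | x ∈ stdSimplex ℝ ι ∧ ∀ i ∉ J, x i = 0}

lemma stdSimplexFace_univ : stdSimplexFace (Finset.univ : Finset ι) = stdSimplex ℝ ι := by
  simp [stdSimplexFace]

lemma sum_eq_one_of_mem_stdSimplexFace {J : Finset ι} {x : ι → ℝ} (hx : x ∈ stdSimplexFace J) :
    ∑ i ∈ J, x i = 1 :=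
  (Finset.sum_subset J.subset_univ fun i _ hi ↦ hx.2 i hi).trans hx.1.2

lemma stdSimplexFace_empty : stdSimplexFace (∅ : Finset ι) = ∅ :=
  Set.eq_empty_of_forall_notMem fun _ hx ↦ by
    simpa using sum_eq_one_of_mem_stdSimplexFace hx

lemma mem_stdSimplexFace_erase [DecidableEq ι] {J : Finset ι} {i : ι} {x : ι → ℝ} :
    x ∈ stdSimplexFace (J.erase i) ↔ x ∈ stdSimplexFace J ∧ x i = 0 := by
  simp only [stdSimplexFace, Set.mem_ofPred_eq, Finset.mem_erase]
  grind

lemma convex_stdSimplexFace (J : Finset ι) : Convex ℝ (stdSimplexFace J) := by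
  refine (convex_stdSimplex ℝ ι).inter fun x hx y hy a b _ _ _ i hi ↦ ?_
  simp [hx i hi, hy i hi]

lemma isClosed_stdSimplexFace (J : Finset ι) : IsClosed (stdSimplexFace J) := by
  have heq : stdSimplexFace J = stdSimplex ℝ ι ∩ ⋂ i ∉ J, {x | x i = 0} := by
    ext x
    simp [stdSimplexFace]
  rw [heq]
  exact (isClosed_stdSimplex ℝ ι).inter <| isClosed_biInter fun i _ ↦
    isClosed_eq (continuous_apply i) continuous_const

end Faces

section Sperner

open ListChain Finsupp

section SpernerMap

variable {ι : Type*} [Fintype ι] [DecidableEq ι]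

lemma map_single_mem_smallSimplices (l : List ι) :
    l.map (Pi.single · 1) ∈ smallSimplices (stdSimplexFace l.toFinset) l.length 1 := by
  simp only [smallSimplices, Set.mem_ofPred_eq, List.length_map, List.forall_mem_map]
  refine ⟨le_rfl, fun i hi ↦ ⟨single_mem_stdSimplex ℝ i, fun j hj ↦ ?_⟩, fun i _ j _ ↦ ?_⟩
  · exact Pi.single_eq_of_ne (by rintro rfl; exact hj (List.mem_toFinset.2 hi)) _
  · exact (Metric.dist_le_diam_of_mem (bounded_stdSimplex ι)
      (single_mem_stdSimplex ℝ i) (single_mem_stdSimplex ℝ j)).trans diam_stdSimplex_le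

/-- The chain map that subdivides the faces of the standard simplex `N` times and replaces the
vertices of the resulting small simplices by their labels. -/
noncomputable def spernerMap (lab : (ι → ℝ) → ι) (N : ℕ) : ListChain ι →ₗ[ZMod 2] ListChain ι :=
  map lab ∘ₗ (subdivide barycenter ^ N) ∘ₗ map (Pi.single · 1)

variable (lab : (ι → ℝ) → ι) (N : ℕ)

lemma boundary_spernerMap (c : ListChain ι) :
    boundary (spernerMap lab N c) = spernerMap lab N (boundary c) := by
  have hcomm := (commute_boundary_subdivide (E := ι → ℝ) barycenter).pow_right N
  simp only [spernerMap, LinearMap.comp_apply, boundary_map]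
  exact congr_arg _ ((LinearMap.congr_fun hcomm.eq _).trans <| by
    rw [Module.End.mul_apply, boundary_map])

lemma spernerMap_single_nil : spernerMap lab N (single [] 1) = single [] 1 := by
  simp only [spernerMap, LinearMap.comp_apply, map_single, List.map_nil, Module.End.pow_apply]
  rw [Function.iterate_fixed (subdivide_single_nil barycenter), map_single, List.map_nil]

lemma spernerMap_single_mem_carriedBy (l : List ι) :
    spernerMap lab N (single l 1) ∈ carriedBy (List.map lab ''
      smallSimplices (stdSimplexFace l.toFinset) l.length ((1 - (l.length : ℝ)⁻¹) ^ N)) := by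
  rw [← mul_one ((1 - (l.length : ℝ)⁻¹) ^ N)]
  have hsubdivide := subdivide_pow_mem_carriedBy (convex_stdSimplexFace l.toFinset)
    (single_mem_supported (ZMod 2) (1 : ZMod 2) (map_single_mem_smallSimplices l)) N
  rw [spernerMap, LinearMap.comp_apply, LinearMap.comp_apply, map_single]
  refine map_mem_of_mem_carriedBy (fun m hm ↦ ?_) hsubdivide
  rw [map_single]
  exact single_mem_supported _ _ (Set.mem_image_of_mem _ hm)

end SpernerMap

theorem exists_dist_lt_of_sperner_labelling {ι : Type*} [Fintype ι] {lab : (ι → ℝ) → ι}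
    (hlab : ∀ x ∈ stdSimplex ℝ ι, x (lab x) ≠ 0) {ε : ℝ} (hε : 0 < ε) :
    ∃ p : ι → ι → ℝ, (∀ i, p i ∈ stdSimplex ℝ ι ∧ lab (p i) = i) ∧ ∀ i j, dist (p i) (p j) < ε := by
  classical
  have : Nonempty ι := ⟨lab 0⟩
  obtain ⟨N, hN⟩ : ∃ N : ℕ, (1 - (Fintype.card ι : ℝ)⁻¹) ^ N < ε :=
    exists_pow_lt_of_lt_one hε (by simp [Fintype.card_pos])
  have hcarrier (l : List ι) : spernerMap lab N (single l 1) ∈ carriedBy {m | m ⊆ l} := by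
    refine supported_mono ?_ (spernerMap_single_mem_carriedBy lab N l)
    rintro _ ⟨m, ⟨-, hm, -⟩, rfl⟩ i hi
    obtain ⟨x, hx, rfl⟩ := List.mem_map.1 hi
    by_contra hxl
    exact hlab x (hm x hx).1 ((hm x hx).2 _ (by simpa using hxl))
  have hcount := enumCount_apply_single_eq_one (boundary_spernerMap lab N)
    (spernerMap_single_nil lab N) hcarrier (Finset.nodup_toList Finset.univ)
  obtain ⟨_, ⟨m, ⟨-, hm, hmN⟩, rfl⟩, hmuniv⟩ := exists_coe_eq_val_of_enumCount_ne_zero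
    (spernerMap_single_mem_carriedBy lab N Finset.univ.toList) (by rw [hcount]; exact one_ne_zero)
  have hall (i : ι) : ∃ x ∈ m, lab x = i := by
    rw [← List.mem_map, ← Multiset.mem_coe, hmuniv]
    simp
  choose p hpm hp using hall
  refine ⟨p, fun i ↦ ⟨(hm _ (hpm i)).1, hp i⟩, fun i j ↦ ?_⟩
  exact (hmN _ (hpm i) _ (hpm j)).trans_lt (by simpa using hN)

end Sperner

theorem exists_injective_mem_of_stdSimplex_subset_iUnion {ι κ : Type*} [Fintype ι]
    [Nonempty ι] {V : κ → Set (ι → ℝ)}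
    (hopen : ∀ j, IsOpen (V j)) (hcover : stdSimplex ℝ ι ⊆ ⋃ j, V j)
    (hfacet : ∀ j, ∃ i, ∀ x ∈ stdSimplex ℝ ι, x ∈ V j → x i ≠ 0) :
    ∃ x ∈ stdSimplex ℝ ι, ∃ b : ι → κ, Function.Injective b ∧ ∀ i, x ∈ V (b i) := by
  obtain ⟨ε, hε, hball⟩ :=
    lebesgue_number_lemma_of_metric (isCompact_stdSimplex ℝ ι) hopen hcover
  choose a ha using hfacet
  obtain ⟨i₀⟩ := ‹Nonempty ι›
  have : Nonempty κ := by
    classical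
    exact (Set.mem_iUnion.1 (hcover (single_mem_stdSimplex ℝ i₀))).nonempty
  choose! c hc using hball
  obtain ⟨p, hp, hdist⟩ := exists_dist_lt_of_sperner_labelling (lab := a ∘ c)
    (fun x hx ↦ ha _ x hx (hc x hx (Metric.mem_ball_self hε))) hε
  refine ⟨p i₀, (hp i₀).1, c ∘ p, fun i j hij ↦ ?_, fun i ↦ hc _ (hp i).1 (hdist i₀ i)⟩
  rw [← (hp i).2, ← (hp j).2]
  exact congr_arg a hij

section Extension

variable {Y X : Type*} [TopologicalSpace Y] [TopologicalSpace X] {S Z : Set Y} {B : Set X}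

-- Near `Z` run the contraction of `B` along `f ∘ r`, with `2 * u` as time; it is already constant
-- where `r` ceases to be defined.
theorem exists_continuousOn_eqOn_of_collar [ContractibleSpace B] {u : Y → ℝ}
    (hu : ContinuousOn u S) (huZ : ∀ x ∈ Z, u x ≤ 0) {r : Y → Y}
    (hr : ContinuousOn r (S ∩ {x | u x < 1})) (hrZ : Set.MapsTo r (S ∩ {x | u x < 1}) Z)
    (hid : Set.EqOn r id Z) {f : Y → X} (hf : ContinuousOn f Z) (hfB : Set.MapsTo f Z B) :
    ∃ g : Y → X, ContinuousOn g S ∧ Set.MapsTo g S B ∧ Set.EqOn g f Z := by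
  classical
  obtain ⟨c, ⟨H⟩⟩ := id_nullhomotopic B
  let time (x : Y) : unitInterval := Set.projIcc 0 1 zero_le_one (2 * u x)
  let fB (x : Y) : B := if hx : f x ∈ B then ⟨f x, hx⟩ else c
  let g (x : Y) : B := H (time x, fB (r x))
  have htime : ContinuousOn time S := continuous_projIcc.comp_continuousOn (by fun_prop)
  have hfB_eq {x : Y} (hx : x ∈ Z) : (fB x : X) = f x := by simp [fB, hfB hx]
  have hfB_cont : ContinuousOn fB Z :=
    Topology.IsInducing.subtypeVal.continuousOn_iff.2 (hf.congr fun x hx ↦ hfB_eq hx)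
  have hcollar : ContinuousOn g (S ∩ {x | u x < 1}) :=
    H.continuous.comp_continuousOn
      ((htime.mono Set.inter_subset_left).prodMk (hfB_cont.comp hr hrZ))
  have hconst {x : Y} (hx : 1 < 2 * u x) : g x = c := by
    simp [g, time, Set.projIcc_of_right_le _ hx.le]
  have hg : ContinuousOn g S := by
    intro x hx
    rcases lt_or_ge (u x) 1 with hux | hux
    · refine (hcollar x ⟨hx, hux⟩).mono_of_mem_nhdsWithin ?_
      exact Filter.inter_mem self_mem_nhdsWithin ((hu x hx).eventually_lt_const hux)
    · refine (continuousWithinAt_const (b := c)).congr_of_eventuallyEq ?_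
        (hconst (by linarith))
      filter_upwards [(hu x hx).eventually_const_lt (show 1 / 2 < u x by linarith)] with y hy
      exact hconst (by linarith)
  refine ⟨fun x ↦ g x, continuous_subtype_val.comp_continuousOn hg, fun x _ ↦ (g x).2, ?_⟩
  intro x hx
  have htime_zero : time x = 0 := Set.projIcc_of_le_left _ (by linarith [huZ x hx])
  simp [g, htime_zero, hid hx, hfB_eq hx]

end Extension

section FaceCollar

variable {ι : Type*} {J : Finset ι} (hJ : J.Nonempty)

/-- The depth of a point in the face `stdSimplexFace J`: it is `0` on the relative boundary and
attains its maximum `1` at the barycenter only. -/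
noncomputable def faceDepth (x : ι → ℝ) : ℝ :=
  J.card * J.inf' hJ x

/-- The radial projection from the barycenter of `stdSimplexFace J` to the relative boundary; at the
barycenter itself its value is `0`. -/
noncomputable def faceProj (x : ι → ℝ) : ι → ℝ :=
  (1 - faceDepth hJ x)⁻¹ • (x - Set.indicator J fun _ ↦ J.inf' hJ x)

lemma continuous_faceDepth : Continuous (faceDepth hJ) :=
  continuous_const.mul (Continuous.finset_inf'_apply hJ fun i _ ↦ continuous_apply i)

lemma continuousOn_faceProj : ContinuousOn (faceProj hJ) {x | faceDepth hJ x < 1} := by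
  have hinf : Continuous fun x : ι → ℝ ↦ J.inf' hJ x :=
    Continuous.finset_inf'_apply hJ fun i _ ↦ continuous_apply i
  have hindicator : Continuous fun x : ι → ℝ ↦ Set.indicator (J : Set ι) fun _ ↦ J.inf' hJ x := by
    refine continuous_pi fun i ↦ ?_
    by_cases hi : i ∈ J <;> simp [hi, hinf, continuous_const]
  refine ((continuous_const.sub (continuous_faceDepth hJ)).continuousOn.inv₀ fun x hx ↦ ?_).smul
    (continuous_id.sub hindicator).continuousOn
  exact (sub_pos.2 hx).ne'

variable [Fintype ι] {x : ι → ℝ}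

/-- The relative boundary of the face `stdSimplexFace J`. -/
def stdSimplexFaceBoundary (J : Finset ι) : Set (ι → ℝ) :=
  {x | x ∈ stdSimplexFace J ∧ ∃ i ∈ J, x i = 0}

lemma inf'_eq_zero_of_mem_stdSimplexFaceBoundary (hx : x ∈ stdSimplexFaceBoundary J) :
    J.inf' hJ x = 0 := by
  obtain ⟨hxJ, i, hi, hxi⟩ := hx
  exact le_antisymm (hxi ▸ Finset.inf'_le x hi) (Finset.le_inf' hJ x fun j _ ↦ hxJ.1.1 j)

lemma faceProj_mem_stdSimplexFaceBoundary (hx : x ∈ stdSimplexFace J) (hlt : faceDepth hJ x < 1) :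
    faceProj hJ x ∈ stdSimplexFaceBoundary J := by
  have hpos : 0 < 1 - faceDepth hJ x := sub_pos.2 hlt
  have hmem (i : ι) (hi : i ∈ J) :
      faceProj hJ x i = (1 - faceDepth hJ x)⁻¹ * (x i - J.inf' hJ x) := by simp [faceProj, hi]
  have hnotMem (i : ι) (hi : i ∉ J) : faceProj hJ x i = 0 := by simp [faceProj, hi, hx.2 i hi]
  refine ⟨⟨⟨fun i ↦ ?_, ?_⟩, hnotMem⟩, ?_⟩
  · by_cases hi : i ∈ J
    · rw [hmem i hi]
      exact mul_nonneg (inv_nonneg.2 hpos.le) (sub_nonneg.2 (Finset.inf'_le x hi))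
    · exact (hnotMem i hi).ge
  · calc ∑ i, faceProj hJ x i
        = ∑ i ∈ J, (1 - faceDepth hJ x)⁻¹ * (x i - J.inf' hJ x) := by
          rw [← Finset.sum_subset J.subset_univ fun i _ ↦ hnotMem i, Finset.sum_congr rfl hmem]
      _ = (1 - faceDepth hJ x)⁻¹ * (1 - faceDepth hJ x) := by
          rw [← Finset.mul_sum, Finset.sum_sub_distrib, sum_eq_one_of_mem_stdSimplexFace hx,
            Finset.sum_const, nsmul_eq_mul, faceDepth]
      _ = 1 := inv_mul_cancel₀ hpos.ne'
  · obtain ⟨i, hi, hxi⟩ := Finset.exists_mem_eq_inf' hJ x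
    exact ⟨i, hi, by rw [hmem i hi, hxi, sub_self, mul_zero]⟩

lemma eqOn_faceProj : Set.EqOn (faceProj hJ) id (stdSimplexFaceBoundary J) := by
  intro x hx
  have hinf := inf'_eq_zero_of_mem_stdSimplexFaceBoundary hJ hx
  ext i
  simp [faceProj, faceDepth, hinf]

end FaceCollar

lemma exists_continuousOn_stdSimplexFace_eqOn {ι X : Type*} [Fintype ι] {J : Finset ι}
    (hJ : J.Nonempty) [TopologicalSpace X] {B : Set X} [ContractibleSpace B] {f : (ι → ℝ) → X}
    (hf : ContinuousOn f (stdSimplexFaceBoundary J))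
    (hfB : Set.MapsTo f (stdSimplexFaceBoundary J) B) :
    ∃ g : (ι → ℝ) → X, ContinuousOn g (stdSimplexFace J) ∧ Set.MapsTo g (stdSimplexFace J) B ∧
      Set.EqOn g f (stdSimplexFaceBoundary J) :=
  exists_continuousOn_eqOn_of_collar (continuous_faceDepth hJ).continuousOn
    (fun x hx ↦ by rw [faceDepth, inf'_eq_zero_of_mem_stdSimplexFaceBoundary hJ hx, mul_zero])
    ((continuousOn_faceProj hJ).mono Set.inter_subset_right)
    (fun x hx ↦ faceProj_mem_stdSimplexFaceBoundary hJ hx.1 hx.2) (eqOn_faceProj hJ) hf hfB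

section SimplexMap

variable {ι X : Type*} [Fintype ι] [TopologicalSpace X] {B : Finset ι → Set X}

/-- `F` is continuous on the face of the standard simplex spanned by `J` and maps it to `B J`. -/
def IsFaceMap (B : Finset ι → Set X) (F : (ι → ℝ) → X) (J : Finset ι) : Prop :=
  ContinuousOn F (stdSimplexFace J) ∧ Set.MapsTo F (stdSimplexFace J) (B J)

lemma IsFaceMap.congr {F G : (ι → ℝ) → X} {J : Finset ι} (hF : IsFaceMap B F J)
    (hGF : Set.EqOn G F (stdSimplexFace J)) : IsFaceMap B G J :=
  ⟨hF.1.congr hGF, hF.2.congr hGF.symm⟩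

lemma exists_isFaceMap_eqOn_boundary (hB : Monotone B) {J : Finset ι} [ContractibleSpace (B J)]
    {F : (ι → ℝ) → X} (hJ : J.Nonempty) (hF : ∀ K ⊂ J, IsFaceMap B F K) :
    ∃ G, IsFaceMap B G J ∧ Set.EqOn G F (stdSimplexFaceBoundary J) := by
  classical
  have hfacet (i : J) := hF _ (Finset.erase_ssubset i.2)
  have hmem {x : ι → ℝ} (hx : x ∈ stdSimplexFaceBoundary J) :
      ∃ i : J, x ∈ stdSimplexFace (J.erase i) := by
    obtain ⟨hxJ, i, hi, hxi⟩ := hx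
    exact ⟨⟨i, hi⟩, mem_stdSimplexFace_erase.2 ⟨hxJ, hxi⟩⟩
  have hcont : ContinuousOn F (⋃ i : J, stdSimplexFace (J.erase i)) :=
    (locallyFinite_of_finite _).continuousOn_iUnion (fun i ↦ isClosed_stdSimplexFace _)
      fun i ↦ (hfacet i).1
  have hmaps : Set.MapsTo F (stdSimplexFaceBoundary J) (B J) := by
    intro x hx
    obtain ⟨i, hxi⟩ := hmem hx
    exact hB (Finset.erase_subset _ J) ((hfacet i).2 hxi)
  obtain ⟨G, hG, hGB, hGF⟩ := exists_continuousOn_stdSimplexFace_eqOn hJ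
    (hcont.mono fun x hx ↦ Set.mem_iUnion.2 (hmem hx)) hmaps
  exact ⟨G, ⟨hG, hGB⟩, hGF⟩

lemma exists_isFaceMap_of_maximal (hB : Monotone B) {J : Finset ι}
    (hJ : J.Nonempty → ContractibleSpace (B J)) {𝒮 : Set (Finset ι)} {F : (ι → ℝ) → X}
    (hF : ∀ K ∈ 𝒮, IsFaceMap B F K) (hsub : ∀ K ⊂ J, K ∈ 𝒮) (hmax : ∀ K ∈ 𝒮, ¬J ⊆ K) :
    ∃ G, IsFaceMap B G J ∧ ∀ K ∈ 𝒮, IsFaceMap B G K := by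
  classical
  rcases J.eq_empty_or_nonempty with rfl | hne
  · exact ⟨F, by simp [IsFaceMap, stdSimplexFace_empty, Set.mapsTo_empty], hF⟩
  have := hJ hne
  obtain ⟨G, hG, hGF⟩ := exists_isFaceMap_eqOn_boundary hB hne fun K hK ↦ hF K (hsub K hK)
  refine ⟨(stdSimplexFace J).piecewise G F, hG.congr (Set.piecewise_eqOn _ _ _), fun K hK ↦ ?_⟩
  refine (hF K hK).congr fun x hxK ↦ ?_
  by_cases hxJ : x ∈ stdSimplexFace J
  · obtain ⟨i, hiJ, hiK⟩ := Finset.not_subset.1 (hmax K hK)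
    rw [Set.piecewise_eq_of_mem _ _ _ hxJ]
    exact hGF ⟨hxJ, i, hiJ, hxK.2 i hiK⟩
  · exact Set.piecewise_eq_of_notMem _ _ _ hxJ

theorem exists_forall_isFaceMap [Nonempty X] (hB : Monotone B)
    (hcontr : ∀ J, J.Nonempty → ContractibleSpace (B J)) :
    ∃ F : (ι → ℝ) → X, ∀ J, IsFaceMap B F J := by
  classical
  suffices hlower : ∀ 𝒮 : Finset (Finset ι), IsLowerSet (𝒮 : Set (Finset ι)) →
      ∃ F : (ι → ℝ) → X, ∀ J ∈ 𝒮, IsFaceMap B F J by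
    obtain ⟨F, hF⟩ := hlower Finset.univ (by simpa using isLowerSet_univ)
    exact ⟨F, fun J ↦ hF J (Finset.mem_univ J)⟩
  intro 𝒮
  refine Finset.induction_on_max_value Finset.card 𝒮
    (fun _ ↦ ⟨fun _ ↦ Classical.arbitrary X, by simp⟩) fun J 𝒮 hJ𝒮 hcard ih hlower ↦ ?_
  have hmax (K) (hK : K ∈ 𝒮) (hJK : J ⊆ K) : False :=
    hJ𝒮 (Finset.eq_of_subset_of_card_le hJK (hcard K hK) ▸ hK)
  have hmem {K L} (hKL : K ⊆ L) (hL : L ∈ insert J 𝒮) (hKJ : K ≠ J) : K ∈ 𝒮 :=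
    Finset.mem_of_mem_insert_of_ne (hlower hKL hL) hKJ
  obtain ⟨F, hF⟩ := ih fun L K hKL hL ↦ hmem hKL (Finset.mem_insert_of_mem hL) <| by
    rintro rfl
    exact hmax L hL hKL
  obtain ⟨G, hGJ, hG⟩ := exists_isFaceMap_of_maximal hB (hcontr J) (𝒮 := 𝒮) hF
    (fun K hK ↦ hmem hK.subset (Finset.mem_insert_self J 𝒮) hK.ne) hmax
  exact ⟨G, (Finset.forall_mem_insert _ _ _).2 ⟨hGJ, hG⟩⟩

end SimplexMap

namespace CompactTopDimLE

variable {X : Type} [TopologicalSpace X] {n : ℕ}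

lemma exists_refinement (hdim : CompactTopDimLE X n) {K : Set X} (hK : IsCompact K) {ι : Type*}
    {U : ι → Set X} (hU : ∀ i, IsOpen (U i)) (hKU : K ⊆ ⋃ i, U i) :
    ∃ (κ : Type) (V : κ → Set X), (∀ j, IsOpen (V j)) ∧ K ⊆ (⋃ j, V j) ∧ (∀ j, ∃ i, V j ⊆ U i) ∧
      ∀ x ∈ K, ∃ s : Finset κ, s.card ≤ n + 1 ∧ ∀ j, x ∈ V j → j ∈ s := by
  obtain ⟨κ, V, hV, hKV, hVU, hmult⟩ := hdim K hK (Set.range U) (↑)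
    (by rintro ⟨_, i, rfl⟩; exact hU i) (by simpa [Set.iUnion_subtype] using hKU)
  exact ⟨κ, V, hV, hKV, fun j ↦ by simpa using hVU j, hmult⟩

variable [T2Space X] {ι : Type*} [Fintype ι]

theorem card_le_of_iInter_image_facet_eq_empty (hdim : CompactTopDimLE X n) {F : (ι → ℝ) → X}
    (hF : ContinuousOn F (stdSimplex ℝ ι))
    (hempty : ⋂ i, F '' {x ∈ stdSimplex ℝ ι | x i = 0} = ∅) : Fintype.card ι ≤ n + 1 := by
  rcases isEmpty_or_nonempty ι with _ | _
  · simp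
  have hfacet (i : ι) : IsClosed (F '' {x ∈ stdSimplex ℝ ι | x i = 0}) := by
    refine (IsCompact.image_of_continuousOn ?_ (hF.mono (Set.sep_subset _ _))).isClosed
    exact (isCompact_stdSimplex ℝ ι).inter_right (isClosed_eq (continuous_apply i) continuous_const)
  obtain ⟨κ, V, hV, hcover, hVfacet, hmult⟩ := hdim.exists_refinement
    ((isCompact_stdSimplex ℝ ι).image_of_continuousOn hF) (fun i ↦ (hfacet i).isOpen_compl)
    (by simp [← Set.compl_iInter, hempty])
  choose W hW hVW using fun j ↦ continuousOn_iff'.1 hF (V j) (hV j)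
  have hmem {j : κ} {x : ι → ℝ} (hx : x ∈ stdSimplex ℝ ι) : x ∈ W j ↔ F x ∈ V j := by
    simpa [hx] using (Set.ext_iff.1 (hVW j) x).symm
  obtain ⟨x, hx, b, hb, hxb⟩ := exists_injective_mem_of_stdSimplex_subset_iUnion hW
    (fun x hx ↦ by simpa [hmem hx] using hcover ⟨x, hx, rfl⟩)
    (fun j ↦ (hVfacet j).imp fun i hi x hx hxW hxi ↦ hi ((hmem hx).1 hxW) ⟨x, ⟨hx, hxi⟩, rfl⟩)
  obtain ⟨s, hs, hsV⟩ := hmult (F x) ⟨x, hx, rfl⟩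
  calc Fintype.card ι ≤ s.card :=
        Finset.card_le_card_of_injOn b (fun i _ ↦ hsV _ ((hmem hx).1 (hxb i))) hb.injOn
    _ ≤ n + 1 := hs

theorem card_le_of_iInter_eq_empty (hdim : CompactTopDimLE X n) {A : ι → Set X}
    (hcontr : ∀ J : Finset ι, J.Nonempty → ContractibleSpace ↥(⋂ i ∉ J, A i))
    (hempty : ⋂ i, A i = ∅) : Fintype.card ι ≤ n + 1 := by
  classical
  rcases isEmpty_or_nonempty ι with _ | _
  · simp
  have : Nonempty X :=
    have := hcontr Finset.univ Finset.univ_nonempty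
    Nonempty.map Subtype.val (inferInstance : Nonempty ↥(⋂ i ∉ Finset.univ, A i))
  have hmono : Monotone fun J : Finset ι ↦ ⋂ i ∉ J, A i :=
    fun J K hJK ↦ Set.biInter_subset_biInter_left fun i hi hiJ ↦ hi (hJK hiJ)
  obtain ⟨F, hF⟩ := exists_forall_isFaceMap hmono hcontr
  refine hdim.card_le_of_iInter_image_facet_eq_empty (F := F)
    (stdSimplexFace_univ (ι := ι) ▸ (hF Finset.univ).1) ?_
  refine Set.subset_empty_iff.1 (hempty ▸ Set.iInter_mono fun i ↦ ?_)
  rintro _ ⟨x, ⟨hx, hxi⟩, rfl⟩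
  have hxface : x ∈ stdSimplexFace (Finset.univ.erase i) :=
    mem_stdSimplexFace_erase.2 ⟨stdSimplexFace_univ (ι := ι) ▸ hx, hxi⟩
  exact Set.mem_iInter₂.1 ((hF _).2 hxface) i (Finset.notMem_erase i _)

end CompactTopDimLE

lemma biInter_nonempty_of_card_le {ι X : Type*} {A : ι → Set X} {s : Finset ι} {k : ℕ}
    (hs : k ≤ s.card) (h : ∀ t ⊆ s, t.card = k → (⋂ i ∈ t, A i).Nonempty) {t : Finset ι}
    (hts : t ⊆ s) (ht : t.card ≤ k) : (⋂ i ∈ t, A i).Nonempty := by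
  obtain ⟨u, htu, hus, hu⟩ := Finset.exists_subsuperset_card_eq hts ht hs
  exact (h u hus hu).mono (Set.biInter_subset_biInter_left htu)

theorem topological_helly_general {X : Type} [TopologicalSpace X] [T2Space X] {n : ℕ}
    (hdim : CompactTopDimLE X n) {ι : Type*} {A : ι → Set X} {s : Finset ι}
    (hconn : ∀ t ⊆ s, ContractibleSpace ↥(⋂ i ∈ t, A i) ∨ ⋂ i ∈ t, A i = ∅)
    (hinter : ∀ t ⊆ s, t.card ≤ n + 1 → (⋂ i ∈ t, A i).Nonempty) :
    (⋂ i ∈ s, A i).Nonempty := by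
  classical
  induction s using Finset.strongInduction with
  | H s ih =>
  have hproper (t) (hts : t ⊂ s) : (⋂ i ∈ t, A i).Nonempty :=
    ih t hts (fun u hut ↦ hconn u (hut.trans hts.subset))
      fun u hut ↦ hinter u (hut.trans hts.subset)
  by_contra hempty
  suffices hcard : Fintype.card s ≤ n + 1 from
    hempty (hinter s subset_rfl (Fintype.card_coe s ▸ hcard))
  refine hdim.card_le_of_iInter_eq_empty (A := fun i : s ↦ A i) (fun J hJ ↦ ?_) ?_
  · have heq : ⋂ i ∉ J, A i = ⋂ i ∈ s \ J.map (.subtype _), A i := by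
      ext x
      simp only [Set.mem_iInter, Subtype.forall, Finset.mem_sdiff, Finset.mem_map,
        Function.Embedding.subtype_apply, Subtype.exists, exists_and_right, exists_eq_right]
      grind
    have hss : s \ J.map (.subtype _) ⊂ s :=
      Finset.sdiff_ssubset (Finset.map_subtype_subset J) hJ.map
    rw [heq]
    exact (hconn _ hss.subset).resolve_right (hproper _ hss).ne_empty
  · rw [Set.iInter_subtype]
    exact Set.not_nonempty_iff_eq_empty.1 hempty

/-- Topological Helly theorem: in a contractible Hausdorff space of compact
topological dimension exactly `n`, a finite family of `m ≥ n + 2` contractible sets,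
all of whose subfamily intersections are contractible or empty, has nonempty total
intersection provided every `n + 1` of the sets have a common point. -/
theorem topological_helly {X : Type} [TopologicalSpace X] [T2Space X]
    [ContractibleSpace X]
    (n : ℕ) (hdim : CompactTopDimLE X n)
    (hdim_exact : ∀ k : ℕ, CompactTopDimLE X k → n ≤ k)
    (m : ℕ) (A : Fin m → Set X)
    (hA : ∀ i : Fin m, ContractibleSpace (A i))
    (hconn : ∀ s : Finset (Fin m),
      ContractibleSpace ↥(⋂ i ∈ s, A i) ∨ (⋂ i ∈ s, A i) = ∅)
    (hm : n + 2 ≤ m)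
    (hinter : ∀ s : Finset (Fin m), s.card = n + 1 → (⋂ i ∈ s, A i).Nonempty) :
    (⋂ i, A i).Nonempty := by
  have hcard : n + 1 ≤ (Finset.univ : Finset (Fin m)).card := by rw [Finset.card_fin]; lia
  simpa using topological_helly_general hdim (fun t _ ↦ hconn t)
    fun t ↦ biInter_nonempty_of_card_le hcard fun u _ ↦ hinter u
end

section
/- Let n ≥ 1 and let X be a contractible Hausdorff topological space of compact topological dimension at most n (every open cover of every compact subset of X admits an open refinement in which every point belongs to at most n + 1 members). Let A₁, …, A_{n+2} be exactly n + 2 subsets of X, each contractible as a topological subspace, such that the intersection of every subcollection is either contractible (as a subspace) or empty, and such that for every subset I ⊆ {1, …, n+2} with |I| = n + 1 the intersection ⋂_{i∈I} A_i is nonempty. Then ⋂_{i=1}^{n+2} A_i is nonempty. -/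
/-!
By induction on subfamilies one may assume that any family of fewer than all of the sets `A i` has a
nonempty, hence contractible, intersection. A map from the standard simplex that sends the facet
opposite to each vertex `i` into `A i` can then be built skeleton by skeleton. If the images of the
facets had no common point, their complements would cover the image of the simplex, and an open
refinement in which every point lies in at most `n + 1` members would pull back to an open cover of
the simplex whose `i`-th member misses the facet opposite to `i`. By the KKM lemma the members of
such a cover have a common point, which is absurd as soon as there are at least `n + 2` of them.
The KKM lemma comes from Sperner's lemma, proved mod 2 for iterated barycentric subdivisions:
subdividing commutes with taking boundaries, so the parity of the number of rainbow cells can be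
computed by induction on the dimension.
-/

section Facets

variable {α β : Type*}

/-- The facets of the simplex whose ordered list of vertices is `l`. Vertices may repeat, and
facets are counted with multiplicity. -/
def facets (l : List α) : Multiset (List α) :=
  (Finset.univ : Finset (Fin l.length)).val.map fun i : Fin l.length => l.eraseIdx i

theorem mem_facets {l t : List α} :
    t ∈ facets l ↔ ∃ i < l.length, l.eraseIdx i = t := by
  simp [facets, Fin.exists_iff]

theorem facets_nil : facets ([] : List α) = 0 := rfl

theorem facets_cons (a : α) (l : List α) :
    facets (a :: l) = l ::ₘ (facets l).map (a :: ·) := by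
  simp [facets, Fin.univ_succ, Function.comp_def]

theorem facets_map (f : α → β) (l : List α) :
    facets (l.map f) = (facets l).map (List.map f) := by
  induction l with
  | nil => rfl
  | cons a l ih =>
    simp only [List.map_cons, facets_cons, ih, Multiset.map_cons, Multiset.map_map,
      Function.comp_def]

theorem sum_facets {M : Type*} [AddCommMonoid M] (φ : List α → M) (l : List α) :
    ((facets l).map φ).sum = ∑ i : Fin l.length, φ (l.eraseIdx i) := by
  rw [facets, Multiset.map_map]; rfl

theorem sum_bind_facets_cons {M : Type*} [AddCommMonoid M] (φ : List α → M) (a : α)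
    (C : Multiset (List α)) :
    ((C.bind fun l => facets (a :: l)).map φ).sum =
      (C.map φ).sum + ((C.bind facets).map fun t => φ (a :: t)).sum := by
  simp only [facets_cons, Multiset.bind_cons, Multiset.map_id', Multiset.map_add,
    Multiset.sum_add, ← Multiset.map_bind, Multiset.map_map, Function.comp_def]

-- Chains are multisets of simplices. Here and for the subdivision below, an identity between mod 2
-- chains is stated by pairing both sides with an arbitrary mod 2 cochain `φ`.
theorem sum_facets_facets (φ : List α → ZMod 2) (l : List α) :
    (((facets l).bind facets).map φ).sum = 0 := by
  induction l generalizing φ with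
  | nil => rfl
  | cons a l ih =>
    rw [facets_cons, Multiset.cons_bind, Multiset.bind_map, Multiset.map_add, Multiset.sum_add,
      sum_bind_facets_cons, ih, add_zero, CharTwo.add_self_eq_zero]

end Facets

section Rainbow

variable {α ι : Type*}

open Classical in
/-- The mod 2 indicator of the simplices `l` whose vertices carry exactly the labels `L`. -/
noncomputable def rainbow (label : α → ι) (L : List ι) (l : List α) : ZMod 2 :=
  if (l.map label).Perm L then 1 else 0

theorem perm_getElem_cons_iff_map_eraseIdx_perm (label : α → ι) (L : List ι) (l : List α)
    (i : Fin l.length) :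
    (l.map label).Perm (label l[i] :: L) ↔ ((l.eraseIdx i).map label).Perm L := by
  rw [← List.perm_cons (label l[i]) (l₂ := L)]
  exact (((List.getElem_cons_eraseIdx_perm i.2).map label).congr_left _).symm

theorem perm_cons_left_inj {a b : ι} {L : List ι} : (a :: L).Perm (b :: L) ↔ a = b := by
  simp only [← Multiset.coe_eq_coe, ← Multiset.cons_coe, Multiset.cons_inj_left]

theorem sum_facets_rainbow_of_perm [DecidableEq ι] (label : α → ι) {c : ι} {L : List ι}
    {l : List α} (h : (l.map label).Perm (c :: L)) :
    ((facets l).map (rainbow label L)).sum = L.count c + 1 := by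
  have hterm (i : Fin l.length) :
      rainbow label L (l.eraseIdx i) = if label l[i] = c then 1 else 0 := by
    simp only [rainbow, ← perm_getElem_cons_iff_map_eraseIdx_perm, h.congr_left, perm_cons_left_inj,
      eq_comm]
  calc ((facets l).map (rainbow label L)).sum
      = (l.map fun x => if label x = c then (1 : ZMod 2) else 0).sum := by
        simp only [sum_facets, hterm]
        exact Fin.sum_univ_fun_getElem l fun x => if label x = c then (1 : ZMod 2) else 0
    _ = ((l.map label).count c : ZMod 2) := by
        simpa [Function.comp_def] using
          List.sum_map_ite_eq (l.map label) (1 : ι → ZMod 2) 0 c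
    _ = L.count c + 1 := by
        rw [h.count_eq]; simp

theorem sum_facets_rainbow (label : α → ι) {a : ι} {L : List ι} (hL : (a :: L).Nodup)
    {l : List α} (hl : ∀ x ∈ l, label x ∈ a :: L) :
    ((facets l).map (rainbow label L)).sum = rainbow label (a :: L) l := by
  classical
  by_cases h : ∃ c, (l.map label).Perm (c :: L)
  · obtain ⟨c, hc⟩ := h
    have hcL : c ∈ a :: L := by
      obtain ⟨x, hx, rfl⟩ := List.mem_map.1 (hc.mem_iff.2 List.mem_cons_self)
      exact hl x hx
    rw [sum_facets_rainbow_of_perm label hc, rainbow]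
    simp only [hc.congr_left, perm_cons_left_inj]
    obtain ⟨haL, hLn⟩ := List.nodup_cons.1 hL
    rcases List.mem_cons.1 hcL with rfl | hcL'
    · simp [List.count_eq_zero_of_not_mem haL]
    · rw [List.count_eq_one_of_mem hLn hcL', if_neg (ne_of_mem_of_not_mem hcL' haL)]
      exact CharTwo.add_self_eq_zero 1
  · have hfacet (i : Fin l.length) : rainbow label L (l.eraseIdx i) = 0 := if_neg fun hi =>
      h ⟨_, (perm_getElem_cons_iff_map_eraseIdx_perm label L l i).2 hi⟩
    rw [rainbow, if_neg fun ha => h ⟨a, ha⟩, sum_facets]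
    exact Finset.sum_eq_zero fun i _ => hfacet i

end Rainbow

section Subdivision

variable {E : Type*} [AddCommGroup E] [Module ℝ E]

/-- The barycenter of the vertices `l`, counted with multiplicity (`0` for the empty list). -/
noncomputable def listBarycenter (l : List E) : E := (l.length : ℝ)⁻¹ • l.sum

/-- The top-dimensional cells of the barycentric subdivision of the simplex with vertices `l`: the
cones from the barycenter of `l` over the cells of the subdivided facets. -/
noncomputable def subdivision (l : List E) : Multiset (List E) :=
  if l = [] then {[]} else
    ((Finset.univ : Finset (Fin l.length)).val.bind fun i => subdivision (l.eraseIdx i)).map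
      (listBarycenter l :: ·)
termination_by l.length
decreasing_by simp [List.length_eraseIdx, Nat.sub_one_lt_of_lt i.pos]

theorem subdivision_nil : subdivision ([] : List E) = {[]} := by
  rw [subdivision, if_pos rfl]

theorem subdivision_of_ne_nil {l : List E} (hl : l ≠ []) :
    subdivision l = ((facets l).bind subdivision).map (listBarycenter l :: ·) := by
  rw [subdivision, if_neg hl, facets, Multiset.bind_map]

/-- The cells of the `m`-fold barycentric subdivision of the simplex with vertices `l`. -/
noncomputable def iteratedSubdivision : ℕ → List E → Multiset (List E)
  | 0, l => {l}
  | m + 1, l => (iteratedSubdivision m l).bind subdivision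

theorem sum_facets_subdivision (φ : List E → ZMod 2) (l : List E) :
    (((subdivision l).bind facets).map φ).sum = (((facets l).bind subdivision).map φ).sum := by
  induction h : l.length generalizing l φ with
  | zero =>
    rw [List.length_eq_zero_iff.1 h, subdivision_nil, Multiset.singleton_bind, facets_nil,
      Multiset.zero_bind]
  | succ k ih =>
    have hl : l ≠ [] := by rintro rfl; simp at h
    have hcycle (ψ : List E → ZMod 2) :
        ((((facets l).bind subdivision).bind facets).map ψ).sum = 0 :=
      calc _ = ((facets l).map fun t => (((subdivision t).bind facets).map ψ).sum).sum := by
            simp only [Multiset.bind_assoc, Multiset.map_bind, Multiset.sum_bind]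
        _ = ((facets l).map fun t => (((facets t).bind subdivision).map ψ).sum).sum := by
            refine congrArg _ (Multiset.map_congr rfl fun t ht => ih ψ t ?_)
            obtain ⟨i, hi, rfl⟩ := mem_facets.1 ht
            rw [List.length_eraseIdx_of_lt hi, h, Nat.add_sub_cancel]
        _ = (((facets l).bind facets).map fun t => ((subdivision t).map ψ).sum).sum := by
            simp only [Multiset.map_bind, Multiset.sum_bind]
        _ = 0 := sum_facets_facets _ l
    rw [subdivision_of_ne_nil hl, Multiset.bind_map, sum_bind_facets_cons, hcycle, add_zero]

theorem sum_facets_iteratedSubdivision (m : ℕ) (φ : List E → ZMod 2) (l : List E) :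
    (((iteratedSubdivision m l).bind facets).map φ).sum =
      (((facets l).bind (iteratedSubdivision m)).map φ).sum := by
  induction m generalizing φ with
  | zero => simp [iteratedSubdivision, Multiset.map_bind]
  | succ m ih =>
    calc _ = ((iteratedSubdivision m l).map
            fun t => (((subdivision t).bind facets).map φ).sum).sum := by
          simp only [iteratedSubdivision, Multiset.bind_assoc, Multiset.map_bind, Multiset.sum_bind]
      _ = (((iteratedSubdivision m l).bind facets).map
            fun t => ((subdivision t).map φ).sum).sum := by
          simp_rw [sum_facets_subdivision, Multiset.map_bind, Multiset.sum_bind]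
      _ = (((facets l).bind (iteratedSubdivision m)).map
            fun t => ((subdivision t).map φ).sum).sum := ih _
      _ = _ := by
          simp only [iteratedSubdivision, Multiset.map_bind, Multiset.sum_bind]

theorem listBarycenter_mem_convexHull {l : List E} (hl : l ≠ []) :
    listBarycenter l ∈ convexHull ℝ {x | x ∈ l} := by
  have hlen : (l.length : ℝ) ≠ 0 := by simpa using hl
  rw [listBarycenter, ← Fin.sum_univ_getElem, Finset.smul_sum]
  refine (convex_convexHull ℝ _).sum_mem (fun i _ => by positivity) (by simp [hlen]) fun i _ => ?_
  exact subset_convexHull ℝ _ (List.getElem_mem i.2)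

theorem mem_subdivision_iff {l t : List E} (hl : l ≠ []) :
    t ∈ subdivision l ↔
      ∃ i < l.length, ∃ s ∈ subdivision (l.eraseIdx i), listBarycenter l :: s = t := by
  simp only [subdivision_of_ne_nil hl, Multiset.mem_map, Multiset.mem_bind, mem_facets]
  grind

theorem length_of_mem_subdivision {l t : List E} (ht : t ∈ subdivision l) :
    t.length = l.length := by
  induction h : l.length generalizing l t with
  | zero =>
    rw [List.length_eq_zero_iff.1 h, subdivision_nil, Multiset.mem_singleton] at ht
    rw [ht, List.length_nil]
  | succ k ih =>
    obtain ⟨i, hi, s, hs, rfl⟩ :=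
      (mem_subdivision_iff (List.ne_nil_of_length_eq_add_one h)).1 ht
    rw [List.length_cons, ih hs (by rw [List.length_eraseIdx_of_lt hi, h, Nat.add_sub_cancel])]

theorem mem_convexHull_of_mem_subdivision {l t : List E} (ht : t ∈ subdivision l) {x : E}
    (hx : x ∈ t) : x ∈ convexHull ℝ {y | y ∈ l} := by
  induction t generalizing l with
  | nil => simp at hx
  | cons b s ih =>
    have hl : l ≠ [] := by rintro rfl; simp [subdivision_nil] at ht
    obtain ⟨i, -, s', hs', hcons⟩ := (mem_subdivision_iff hl).1 ht
    obtain ⟨rfl, rfl⟩ := List.cons.inj hcons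
    rcases List.mem_cons.1 hx with rfl | hx
    · exact listBarycenter_mem_convexHull hl
    · exact convexHull_mono (fun _ => List.mem_of_mem_eraseIdx) (ih hs' hx)

theorem iteratedSubdivision_nil (m : ℕ) : iteratedSubdivision m ([] : List E) = {[]} := by
  induction m with
  | zero => rfl
  | succ m ih => rw [iteratedSubdivision, ih, Multiset.singleton_bind, subdivision_nil]

theorem length_of_mem_iteratedSubdivision {m : ℕ} {l t : List E}
    (ht : t ∈ iteratedSubdivision m l) : t.length = l.length := by
  induction m generalizing t with
  | zero => rw [Multiset.mem_singleton.1 ht]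
  | succ m ih =>
    obtain ⟨s, hs, hts⟩ := Multiset.mem_bind.1 ht
    rw [length_of_mem_subdivision hts, ih hs]

theorem mem_convexHull_of_mem_iteratedSubdivision {m : ℕ} {l t : List E}
    (ht : t ∈ iteratedSubdivision m l) {x : E} (hx : x ∈ t) :
    x ∈ convexHull ℝ {y | y ∈ l} := by
  induction m generalizing t x with
  | zero =>
    rw [Multiset.mem_singleton.1 ht] at hx
    exact subset_convexHull ℝ _ hx
  | succ m ih =>
    obtain ⟨s, hs, hts⟩ := Multiset.mem_bind.1 ht
    exact convexHull_min (fun _ => ih hs) (convex_convexHull ℝ _)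
      (mem_convexHull_of_mem_subdivision hts hx)

end Subdivision

section Geometry

open Metric

variable {E : Type*} [NormedAddCommGroup E] [NormedSpace ℝ E]

theorem dist_listBarycenter_le {l : List E} {v : E} (hv : v ∈ l) :
    dist (listBarycenter l) v ≤ (1 - (l.length : ℝ)⁻¹) * diam {x | x ∈ l} := by
  obtain ⟨j, rfl⟩ := List.get_of_mem hv
  have hlen : (l.length : ℝ) ≠ 0 := by have := j.pos; positivity
  have hdist (i : Fin l.length) : ‖l.get i - l.get j‖ ≤ diam {x | x ∈ l} := by
    rw [← dist_eq_norm]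
    exact dist_le_diam_of_mem l.finite_toSet.isBounded (l.get_mem i) (l.get_mem j)
  have hsub : listBarycenter l - l.get j = (l.length : ℝ)⁻¹ • ∑ i, (l.get i - l.get j) := by
    rw [Finset.sum_sub_distrib, Finset.sum_const, Finset.card_fin, smul_sub,
      ← Nat.cast_smul_eq_nsmul ℝ, inv_smul_smul₀ hlen, listBarycenter, ← Fin.sum_univ_getElem]
    rfl
  have hsum : ‖∑ i, (l.get i - l.get j)‖ ≤ (l.length - 1) * diam {x | x ∈ l} := by
    rw [← Finset.sum_erase Finset.univ (a := j) (sub_self (l.get j))]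
    refine (norm_sum_le_of_le _ fun i _ => hdist i).trans_eq ?_
    simp [Nat.cast_pred j.pos]
  rw [dist_eq_norm, hsub, norm_smul, norm_inv, RCLike.norm_natCast]
  calc (l.length : ℝ)⁻¹ * ‖∑ i, (l.get i - l.get j)‖
      ≤ (l.length : ℝ)⁻¹ * ((l.length - 1) * diam {x | x ∈ l}) := by gcongr
    _ = (1 - (l.length : ℝ)⁻¹) * diam {x | x ∈ l} := by field_simp

theorem dist_listBarycenter_le_of_mem_convexHull {l : List E} {x : E}
    (hx : x ∈ convexHull ℝ {x | x ∈ l}) :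
    dist x (listBarycenter l) ≤ (1 - (l.length : ℝ)⁻¹) * diam {x | x ∈ l} := by
  refine convexHull_min (fun v hv => ?_) (convex_closedBall (listBarycenter l) _) hx
  rw [mem_closedBall, dist_comm]
  exact dist_listBarycenter_le hv

theorem one_sub_inv_natCast_nonneg (k : ℕ) : 0 ≤ 1 - (k : ℝ)⁻¹ :=
  sub_nonneg.2 (Nat.cast_inv_le_one k)

theorem diam_le_of_mem_subdivision {l t : List E} (ht : t ∈ subdivision l) :
    diam {x | x ∈ t} ≤ (1 - (l.length : ℝ)⁻¹) * diam {x | x ∈ l} := by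
  induction t generalizing l with
  | nil => simpa using mul_nonneg (one_sub_inv_natCast_nonneg _) diam_nonneg
  | cons b s ih =>
    have hl : l ≠ [] := by rintro rfl; simp [subdivision_nil] at ht
    obtain ⟨i, -, s', hs', hcons⟩ := (mem_subdivision_iff hl).1 ht
    obtain ⟨rfl, rfl⟩ := List.cons.inj hcons
    have hcenter (x : E) (hx : x ∈ s') := dist_listBarycenter_le_of_mem_convexHull
      (mem_convexHull_of_mem_subdivision ht (List.mem_cons_of_mem _ hx))
    have hfacet (x : E) (hx : x ∈ s') (y : E) (hy : y ∈ s') :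
        dist x y ≤ (1 - (l.length : ℝ)⁻¹) * diam {x | x ∈ l} := by
      have hpos : 0 < (l.eraseIdx i).length :=
        length_of_mem_subdivision hs' ▸ List.length_pos_of_mem hx
      calc dist x y ≤ diam {x | x ∈ s'} := dist_le_diam_of_mem s'.finite_toSet.isBounded hx hy
        _ ≤ (1 - ((l.eraseIdx i).length : ℝ)⁻¹) * diam {x | x ∈ l.eraseIdx i} := ih hs'
        _ ≤ (1 - (l.length : ℝ)⁻¹) * diam {x | x ∈ l} := by
          gcongr
          · exact one_sub_inv_natCast_nonneg _
          · exact List.length_eraseIdx_le l i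
          · exact diam_mono (fun _ => List.mem_of_mem_eraseIdx) l.finite_toSet.isBounded
    refine diam_le_of_forall_dist_le (mul_nonneg (one_sub_inv_natCast_nonneg _) diam_nonneg) ?_
    simp only [Set.mem_ofPred_eq, List.forall_mem_cons, dist_self]
    exact ⟨⟨mul_nonneg (one_sub_inv_natCast_nonneg _) diam_nonneg,
      fun y hy => dist_comm y _ ▸ hcenter y hy⟩, fun x hx => ⟨hcenter x hx, hfacet x hx⟩⟩

theorem diam_le_of_mem_iteratedSubdivision {m : ℕ} {l t : List E}
    (ht : t ∈ iteratedSubdivision m l) :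
    diam {x | x ∈ t} ≤ (1 - (l.length : ℝ)⁻¹) ^ m * diam {x | x ∈ l} := by
  induction m generalizing t with
  | zero => rw [Multiset.mem_singleton.1 ht, pow_zero, one_mul]
  | succ m ih =>
    obtain ⟨s, hs, hts⟩ := Multiset.mem_bind.1 ht
    calc diam {x | x ∈ t} ≤ (1 - (l.length : ℝ)⁻¹) * diam {x | x ∈ s} := by
          simpa only [length_of_mem_iteratedSubdivision hs] using diam_le_of_mem_subdivision hts
      _ ≤ (1 - (l.length : ℝ)⁻¹) * ((1 - (l.length : ℝ)⁻¹) ^ m * diam {x | x ∈ l}) :=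
          mul_le_mul_of_nonneg_left (ih hs) (one_sub_inv_natCast_nonneg _)
      _ = (1 - (l.length : ℝ)⁻¹) ^ (m + 1) * diam {x | x ∈ l} := by ring

end Geometry

section Sperner

variable {E ι : Type*} [AddCommGroup E] [Module ℝ E]

/-- A Sperner labelling: each point in the convex hull of the vertices indexed by `J` is labelled by
an element of `J`. -/
def IsSpernerLabelling (v : ι → E) (label : E → ι) : Prop :=
  ∀ (J : Set ι) (x : E), x ∈ convexHull ℝ (v '' J) → label x ∈ J

namespace IsSpernerLabelling

variable {v : ι → E} {label : E → ι}

theorem label_mem (h : IsSpernerLabelling v label) {m : ℕ} {L : List ι} {t : List E}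
    (ht : t ∈ iteratedSubdivision m (L.map v)) {x : E} (hx : x ∈ t) : label x ∈ L := by
  refine h {i | i ∈ L} x ?_
  convert mem_convexHull_of_mem_iteratedSubdivision ht hx using 2
  ext y
  simp

theorem sum_rainbow_cons_facet (h : IsSpernerLabelling v label) (m : ℕ) {a : ι} {L M : List ι}
    (hL : (a :: L).Nodup) (hM : M ∈ facets L) :
    ((iteratedSubdivision m ((a :: M).map v)).map (rainbow label L)).sum = 0 := by
  obtain ⟨i, hi, rfl⟩ := mem_facets.1 hM
  have hmissing : L[i] ∉ a :: L.eraseIdx i := by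
    obtain ⟨haL, hLn⟩ := List.nodup_cons.1 hL
    have hi' := (List.nodup_cons.1 ((List.getElem_cons_eraseIdx_perm hi).nodup_iff.2 hLn)).1
    exact List.not_mem_cons_of_ne_of_not_mem (ne_of_mem_of_not_mem (List.getElem_mem hi) haL) hi'
  refine Multiset.sum_eq_zero fun z hz => ?_
  obtain ⟨t, ht, rfl⟩ := Multiset.mem_map.1 hz
  refine if_neg fun hperm => hmissing ?_
  obtain ⟨x, hx, hxi⟩ := List.mem_map.1 (hperm.mem_iff.2 (List.getElem_mem hi))
  exact hxi ▸ h.label_mem ht hx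

theorem sum_rainbow (h : IsSpernerLabelling v label) (m : ℕ) {L : List ι} (hL : L.Nodup) :
    ((iteratedSubdivision m (L.map v)).map (rainbow label L)).sum = 1 := by
  induction L with
  | nil => simp [iteratedSubdivision_nil, rainbow]
  | cons a L ih =>
    calc ((iteratedSubdivision m ((a :: L).map v)).map (rainbow label (a :: L))).sum
        = (((iteratedSubdivision m ((a :: L).map v)).bind facets).map (rainbow label L)).sum := by
          rw [Multiset.map_bind, Multiset.sum_bind]
          refine congrArg _ (Multiset.map_congr rfl fun t ht => ?_)
          exact (sum_facets_rainbow label hL fun x => h.label_mem ht).symm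
      _ = (((facets ((a :: L).map v)).bind (iteratedSubdivision m)).map (rainbow label L)).sum :=
          sum_facets_iteratedSubdivision m _ _
      _ = ((iteratedSubdivision m (L.map v)).map (rainbow label L)).sum +
            ((facets L).map fun M =>
              ((iteratedSubdivision m ((a :: M).map v)).map (rainbow label L)).sum).sum := by
          simp only [List.map_cons, facets_cons, facets_map, Multiset.cons_bind, Multiset.bind_map,
            Multiset.map_add, Multiset.sum_add, Multiset.map_bind, Multiset.sum_bind,
            Multiset.map_map, Function.comp_def]
      _ = 1 + 0 := by
          congr 1
          · exact ih (List.nodup_cons.1 hL).2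
          · exact Multiset.sum_eq_zero fun z hz => by
              obtain ⟨M, hM, rfl⟩ := Multiset.mem_map.1 hz
              exact h.sum_rainbow_cons_facet m hL hM
      _ = 1 := add_zero 1

theorem exists_rainbow_cell (h : IsSpernerLabelling v label) (m : ℕ) {L : List ι} (hL : L.Nodup) :
    ∃ t ∈ iteratedSubdivision m (L.map v), (t.map label).Perm L := by
  by_contra! hne
  refine one_ne_zero (α := ZMod 2) ?_
  rw [← h.sum_rainbow m hL]
  refine Multiset.sum_eq_zero fun z hz => ?_
  obtain ⟨t, ht, rfl⟩ := Multiset.mem_map.1 hz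
  exact if_neg (hne t ht)

theorem exists_rainbow_cell_diam_lt {E : Type*} [NormedAddCommGroup E] [NormedSpace ℝ E] {v : ι → E}
    {label : E → ι} (h : IsSpernerLabelling v label) {L : List ι} (hL : L.Nodup) (hne : L ≠ [])
    {δ : ℝ} (hδ : 0 < δ) :
    ∃ m, ∃ t ∈ iteratedSubdivision m (L.map v),
      (t.map label).Perm L ∧ Metric.diam {x | x ∈ t} < δ := by
  have hratio : 1 - (L.length : ℝ)⁻¹ < 1 := by simpa [List.length_pos_iff] using hne
  have hlim := (tendsto_pow_atTop_nhds_zero_of_lt_one (one_sub_inv_natCast_nonneg L.length)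
    hratio).mul_const (Metric.diam {x | x ∈ L.map v})
  rw [zero_mul] at hlim
  obtain ⟨m, hm⟩ := (hlim.eventually_lt_const hδ).exists
  obtain ⟨t, ht, hperm⟩ := h.exists_rainbow_cell m hL
  refine ⟨m, t, ht, hperm, (diam_le_of_mem_iteratedSubdivision ht).trans_lt ?_⟩
  rwa [List.length_map]

end IsSpernerLabelling

end Sperner

section StdFace

open Set

variable {ι : Type*} [Fintype ι]

/-- The closed face of the standard simplex spanned by the vertices in `J`. -/
def stdFace (J : Set ι) : Set (ι → ℝ) :=
  {x ∈ stdSimplex ℝ ι | ∀ i ∉ J, x i = 0}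

/-- The relative boundary of `stdFace J`. -/
def stdFaceBoundary (J : Set ι) : Set (ι → ℝ) :=
  {x ∈ stdFace J | ∃ i ∈ J, x i = 0}

theorem stdFace_univ : stdFace (univ : Set ι) = stdSimplex ℝ ι := by
  simp [stdFace]

theorem stdFace_eq_inter (J : Set ι) :
    stdFace J = stdSimplex ℝ ι ∩ ⋂ i ∈ Jᶜ, {x | x i = 0} := by
  ext x
  simp [stdFace]

theorem isClosed_stdFace (J : Set ι) : IsClosed (stdFace J) := by
  rw [stdFace_eq_inter]
  exact (isClosed_stdSimplex ℝ ι).inter <| isClosed_biInter fun i _ =>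
    isClosed_eq (continuous_apply i) continuous_const

theorem convex_stdFace (J : Set ι) : Convex ℝ (stdFace J) := by
  rw [stdFace_eq_inter]
  exact (convex_stdSimplex ℝ ι).inter <| convex_iInter₂ fun i _ =>
    convex_hyperplane (LinearMap.proj (R := ℝ) (φ := fun _ : ι => ℝ) i).isLinear 0

theorem stdFaceBoundary_eq_iUnion (J : Set ι) :
    stdFaceBoundary J = ⋃ i : J, stdFace (J \ {i.1}) := by
  ext x
  simp only [stdFaceBoundary, stdFace, mem_iUnion, mem_ofPred_eq, mem_sdiff, mem_singleton_iff]
  constructor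
  · rintro ⟨⟨hx, hJ⟩, i, hi, hxi⟩
    exact ⟨⟨i, hi⟩, hx, fun j hj => by grind⟩
  · rintro ⟨⟨i, hi⟩, hx, hJ⟩
    exact ⟨⟨hx, fun j hj => hJ j (by grind)⟩, i, hi, hJ i (by grind)⟩

theorem nonempty_of_mem_stdFace {J : Set ι} {x : ι → ℝ} (hx : x ∈ stdFace J) : J.Nonempty := by
  by_contra hJ
  have hsum := hx.1.2
  simp [hx.2, not_nonempty_iff_eq_empty.1 hJ] at hsum

theorem convexHull_single_image_subset_stdFace [DecidableEq ι] (J : Set ι) :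
    convexHull ℝ ((fun i => Pi.single i 1) '' J) ⊆ stdFace J := by
  refine convexHull_min ?_ (convex_stdFace J)
  rintro _ ⟨i, hi, rfl⟩
  exact ⟨single_mem_stdSimplex ℝ i, fun j hj => Pi.single_eq_of_ne (by grind) 1⟩

end StdFace

section KKM

open Metric

variable {ι : Type*} [Fintype ι]

theorem exists_close_points_of_labelling (label : stdSimplex ℝ ι → ι)
    (hlabel : ∀ x : stdSimplex ℝ ι, x.1 (label x) ≠ 0) {δ : ℝ} (hδ : 0 < δ) :
    ∃ p : ι → stdSimplex ℝ ι, (∀ i, label (p i) = i) ∧ ∀ i j, dist (p i) (p j) < δ := by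
  classical
  rcases isEmpty_or_nonempty ι with _ | _
  · exact ⟨isEmptyElim, isEmptyElim, isEmptyElim⟩
  let v : ι → ι → ℝ := fun i => Pi.single i 1
  let label' : (ι → ℝ) → ι := fun x =>
    if hx : x ∈ stdSimplex ℝ ι then label ⟨x, hx⟩ else Classical.arbitrary ι
  have hsperner : IsSpernerLabelling v label' := by
    intro J x hx
    obtain ⟨hxS, hxJ⟩ := convexHull_single_image_subset_stdFace J hx
    by_contra hJ
    exact hlabel ⟨x, hxS⟩ (by simpa [label', hxS] using hxJ _ hJ)
  let L : List ι := Finset.univ.toList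
  have hL : L ≠ [] := by simp [L, Finset.univ_nonempty.ne_empty]
  obtain ⟨m, t, ht, hperm, hdiam⟩ :=
    hsperner.exists_rainbow_cell_diam_lt (Finset.nodup_toList _) hL hδ
  have htS (x : ι → ℝ) (hx : x ∈ t) : x ∈ stdSimplex ℝ ι := by
    refine convexHull_min (fun y hy => ?_) (convex_stdSimplex ℝ ι)
      (mem_convexHull_of_mem_iteratedSubdivision ht hx)
    obtain ⟨i, -, rfl⟩ := List.mem_map.1 hy
    exact single_mem_stdSimplex ℝ i
  have hvertex (i : ι) : ∃ x ∈ t, label' x = i :=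
    List.mem_map.1 (hperm.mem_iff.2 (Finset.mem_toList.2 (Finset.mem_univ i)))
  choose p hpt hp using hvertex
  refine ⟨fun i => ⟨p i, htS _ (hpt i)⟩, fun i => ?_, fun i j => ?_⟩
  · simpa [label', htS _ (hpt i)] using hp i
  · exact (dist_le_diam_of_mem t.finite_toSet.isBounded (hpt i) (hpt j)).trans_lt hdiam

variable [Nonempty ι]

theorem kkm_isClosed {C : ι → Set (stdSimplex ℝ ι)} (hC : ∀ i, IsClosed (C i))
    (hcover : ⋃ i, C i = Set.univ) (hfacet : ∀ i, ∀ x ∈ C i, x i ≠ 0) : (⋂ i, C i).Nonempty := by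
  by_contra hempty
  rw [Set.not_nonempty_iff_eq_empty] at hempty
  obtain ⟨δ, hδ, hball⟩ := lebesgue_number_lemma_of_metric isCompact_univ
    (fun i => (hC i).isOpen_compl) (by rw [← Set.compl_iInter, hempty, Set.compl_empty])
  choose label hmem using fun x => Set.iUnion_eq_univ_iff.1 hcover x
  obtain ⟨p, hp, hdist⟩ :=
    exists_close_points_of_labelling label (fun x => hfacet _ x (hmem x)) hδ
  obtain ⟨i₀⟩ := ‹Nonempty ι›
  obtain ⟨i, hi⟩ := hball (p i₀) trivial
  exact hi (hdist i i₀) (by simpa only [hp] using hmem (p i))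

theorem kkm_isOpen {W : ι → Set (stdSimplex ℝ ι)} (hW : ∀ i, IsOpen (W i))
    (hcover : ⋃ i, W i = Set.univ) (hfacet : ∀ i, ∀ x ∈ W i, x i ≠ 0) : (⋂ i, W i).Nonempty := by
  obtain ⟨C, hCcover, hC, hCW⟩ :=
    exists_iUnion_eq_closed_subset hW (fun x => Set.toFinite _) hcover
  exact (kkm_isClosed hC hCcover fun i x hx => hfacet i x (hCW i hx)).mono (Set.iInter_mono hCW)

end KKM

section FacetImages

open Set

variable {X : Type} [TopologicalSpace X] {n : ℕ} {ι : Type*}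

theorem CompactTopDimLE.exists_open_refinement (hdim : CompactTopDimLE X n) {K : Set X}
    (hK : IsCompact K) {U : ι → Set X} (hU : ∀ i, IsOpen (U i)) (hKU : K ⊆ ⋃ i, U i) :
    ∃ W : ι → Set X, (∀ i, IsOpen (W i)) ∧ K ⊆ ⋃ i, W i ∧ (∀ i, W i ⊆ U i) ∧
      ∀ x ∈ K, {i | x ∈ W i}.encard ≤ n + 1 := by
  classical
  obtain ⟨κ, V, hV, hKV, hVU, hmult⟩ := hdim K hK (range U) Subtype.val
    (forall_subtype_range_iff.2 hU) (by rwa [← sUnion_eq_iUnion, sUnion_range])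
  have hindex (j : κ) : ∃ i, V j ⊆ U i := by
    obtain ⟨⟨_, i, rfl⟩, hi⟩ := hVU j
    exact ⟨i, hi⟩
  choose c hc using hindex
  refine ⟨fun i => ⋃ (j) (_ : c j = i), V j, fun i => isOpen_biUnion fun j _ => hV j,
    fun x hx => ?_, fun i => iUnion₂_subset fun j hj => hj ▸ hc j, fun x hx => ?_⟩
  · obtain ⟨j, hj⟩ := mem_iUnion.1 (hKV hx)
    exact mem_iUnion.2 ⟨c j, mem_iUnion₂.2 ⟨j, rfl, hj⟩⟩
  · obtain ⟨s, hs, hmem⟩ := hmult x hx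
    have hsub : {i | x ∈ ⋃ (j) (_ : c j = i), V j} ⊆ c '' s := by
      intro i hi
      obtain ⟨j, rfl, hj⟩ := mem_iUnion₂.1 hi
      exact mem_image_of_mem c (hmem j hj)
    calc _ ≤ (c '' s).encard := encard_le_encard hsub
      _ ≤ (s : Set κ).encard := encard_image_le c s
      _ ≤ n + 1 := by rw [encard_coe_eq_coe_finsetCard]; exact_mod_cast hs

variable [Fintype ι]

theorem CompactTopDimLE.nonempty_iInter_image_facets [T2Space X] (hdim : CompactTopDimLE X n)
    (hcard : n + 1 < Fintype.card ι) (F : C(stdSimplex ℝ ι, X)) :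
    (⋂ i, F '' {x | x i = 0}).Nonempty := by
  have : Nonempty ι := Fintype.card_pos_iff.1 (by omega)
  by_contra hempty
  rw [not_nonempty_iff_eq_empty] at hempty
  have hclosed (i : ι) : IsClosed (F '' {x | x i = 0}) :=
    (isClosed_eq ((continuous_apply i).comp continuous_subtype_val)
      continuous_const).isCompact.image F.continuous |>.isClosed
  obtain ⟨W, hW, hcover, hWsub, hmult⟩ := hdim.exists_open_refinement (isCompact_range F.continuous)
    (fun i => (hclosed i).isOpen_compl) (by simp [← compl_iInter, hempty])
  obtain ⟨x, hx⟩ := kkm_isOpen (W := fun i => F ⁻¹' W i) (fun i => (hW i).preimage F.continuous)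
    (by rw [← preimage_iUnion, preimage_eq_univ_iff]; exact hcover)
    fun i x hx hxi => hWsub i hx (mem_image_of_mem F hxi)
  have huniv : {i | F x ∈ W i} = univ := eq_univ_of_forall fun i => mem_iInter.1 hx i
  have hle := hmult (F x) (mem_range_self x)
  rw [huniv, encard_univ, ENat.card_eq_coe_fintype_card] at hle
  exact hcard.not_ge (by exact_mod_cast hle)

end FacetImages

section Extension

open Set Finset unitInterval

theorem exists_continuousOn_extension_of_collar {E X : Type*} [TopologicalSpace E]
    [TopologicalSpace X] {D S : Set E} {Y : Set X} [ContractibleSpace Y] (hD : IsClosed D)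
    {τ : E → ℝ} (hτ : Continuous τ) (hτS : ∀ x ∈ S, τ x = 0) {r : E → E}
    (hr : ContinuousOn r {x ∈ D | τ x ≤ 1}) (hrS : MapsTo r {x ∈ D | τ x ≤ 1} S)
    (hrid : EqOn r id S) (hSD : S ⊆ D) {f : E → X} (hf : ContinuousOn f S) (hfY : MapsTo f S Y) :
    ∃ g : E → X, ContinuousOn g D ∧ MapsTo g D Y ∧ EqOn g f S := by
  classical
  obtain ⟨p, ⟨H⟩⟩ := id_nullhomotopic Y
  let D₁ : Set E := {x ∈ D | τ x ≤ 1}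
  let D₂ : Set E := {x ∈ D | 1 ≤ τ x}
  have hD₁ : IsClosed D₁ := hD.inter (isClosed_le hτ continuous_const)
  have hD₂ : IsClosed D₂ := hD.inter (isClosed_le continuous_const hτ)
  have hDeq : D₁ ∪ D₂ = D := by
    rw [← Set.sep_or]
    exact sep_eq_self_iff_mem_true.2 fun x _ => le_total _ _
  -- `Y` is contracted along the collar `D₁`, so the extension can stay at `p` beyond it.
  let u : D₁ → Y := fun x =>
    H (projIcc 0 1 zero_le_one (τ x), hfY.restrict f S Y (hrS.restrict r D₁ S x))
  have hu : Continuous u := H.continuous.comp <|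
    (continuous_projIcc.comp (hτ.comp continuous_subtype_val)).prodMk <|
      (hf.mapsToRestrict hfY).comp (hr.mapsToRestrict hrS)
  let g : E → X := fun x => if hx : x ∈ D₁ then u ⟨x, hx⟩ else p
  have hg₁ (x : D₁) : g x = u x := dif_pos x.2
  have hg₂ : EqOn g (fun _ => p) D₂ := by
    intro x hx
    by_cases hx₁ : x ∈ D₁
    · have hτx : τ x = 1 := le_antisymm hx₁.2 hx.2
      simp [g, u, hx₁, hτx]
    · exact dif_neg hx₁
  refine ⟨g, ?_, fun x _ => ?_, fun x hx => ?_⟩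
  · rw [← hDeq]
    refine ContinuousOn.union_of_isClosed ?_ (continuousOn_const.congr hg₂) hD₁ hD₂
    rw [continuousOn_iff_continuous_domRestrict]
    exact (continuous_subtype_val.comp hu).congr fun x => (hg₁ x).symm
  · by_cases hx₁ : x ∈ D₁ <;> simp [g, hx₁]
  · have hx₁ : x ∈ D₁ := ⟨hSD hx, by simp [hτS x hx]⟩
    rw [hg₁ ⟨x, hx₁⟩]
    simp [u, hτS x hx, hrid hx]

variable {ι : Type*} {J : Finset ι}

open Classical in
/-- Projection of `stdFace J` onto its boundary from its barycenter: the least coordinate is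
subtracted from every coordinate in `J` and the result is rescaled to have sum `1`. At the
barycenter itself the value is the junk value `0`. -/
noncomputable def radialProjection (hJ : J.Nonempty) (x : ι → ℝ) : ι → ℝ := fun i =>
  if i ∈ J then (x i - J.inf' hJ x) / (1 - #J * J.inf' hJ x) else 0

theorem continuous_finset_inf' (hJ : J.Nonempty) : Continuous fun x : ι → ℝ => J.inf' hJ x :=
  Continuous.finset_inf'_apply hJ fun i _ => continuous_apply i

theorem continuousOn_radialProjection (hJ : J.Nonempty) :
    ContinuousOn (radialProjection hJ) {x | #J * J.inf' hJ x < 1} := by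
  have hinf := continuous_finset_inf' hJ
  refine continuousOn_pi.2 fun i => ?_
  unfold radialProjection
  split_ifs
  · exact ((continuous_apply i).sub hinf).continuousOn.div
      (continuous_const.sub (continuous_const.mul hinf)).continuousOn
      fun x hx => (sub_pos.2 hx).ne'
  · exact continuousOn_const

variable [Fintype ι] {x : ι → ℝ}

theorem sum_eq_one_of_mem_stdFace (hx : x ∈ stdFace (J : Set ι)) : ∑ i ∈ J, x i = 1 := by
  rw [← hx.1.2]
  exact Finset.sum_subset J.subset_univ fun i _ hi => hx.2 i hi

theorem inf'_eq_zero_of_mem_stdFaceBoundary (hJ : J.Nonempty)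
    (hx : x ∈ stdFaceBoundary (J : Set ι)) : J.inf' hJ x = 0 := by
  obtain ⟨hxJ, i, hi, hxi⟩ := hx
  exact le_antisymm (hxi ▸ J.inf'_le x hi) (J.le_inf' hJ x fun j _ => hxJ.1.1 j)

theorem radialProjection_mem_stdFaceBoundary (hJ : J.Nonempty) (hx : x ∈ stdFace (J : Set ι))
    (hlt : #J * J.inf' hJ x < 1) : radialProjection hJ x ∈ stdFaceBoundary (J : Set ι) := by
  classical
  have hpos : 0 < 1 - #J * J.inf' hJ x := sub_pos.2 hlt
  obtain ⟨j, hj, hmin⟩ := J.exists_mem_eq_inf' hJ x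
  refine ⟨⟨⟨fun i => ?_, ?_⟩, fun i hi => if_neg hi⟩, j, hj, ?_⟩
  · unfold radialProjection
    split_ifs with hi
    · exact div_nonneg (sub_nonneg.2 (J.inf'_le x hi)) hpos.le
    · exact le_rfl
  · simp only [radialProjection, Finset.sum_ite_mem, Finset.univ_inter, ← Finset.sum_div,
      Finset.sum_sub_distrib, sum_eq_one_of_mem_stdFace hx, Finset.sum_const, nsmul_eq_mul]
    exact div_self hpos.ne'
  · rw [radialProjection, if_pos hj, ← hmin, sub_self, zero_div]

theorem radialProjection_eq_self (hJ : J.Nonempty) (hx : x ∈ stdFaceBoundary (J : Set ι)) :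
    radialProjection hJ x = x := by
  ext i
  by_cases hi : i ∈ J
  · simp [radialProjection, hi, inf'_eq_zero_of_mem_stdFaceBoundary hJ hx]
  · simp [radialProjection, hi, hx.1.2 i hi]

theorem exists_continuousOn_extension_stdFace {X : Type*} [TopologicalSpace X] {Y : Set X}
    [ContractibleSpace Y] (hJ : J.Nonempty) {f : (ι → ℝ) → X}
    (hf : ContinuousOn f (stdFaceBoundary (J : Set ι)))
    (hfY : MapsTo f (stdFaceBoundary (J : Set ι)) Y) :
    ∃ g : (ι → ℝ) → X, ContinuousOn g (stdFace (J : Set ι)) ∧ MapsTo g (stdFace (J : Set ι)) Y ∧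
      EqOn g f (stdFaceBoundary (J : Set ι)) := by
  have hcollar (x : ι → ℝ) (hx : 2 * (#J * J.inf' hJ x) ≤ 1) : #J * J.inf' hJ x < 1 := by linarith
  exact exists_continuousOn_extension_of_collar (isClosed_stdFace _)
    (τ := fun x => 2 * (#J * J.inf' hJ x))
    (continuous_const.mul (continuous_const.mul (continuous_finset_inf' hJ)))
    (fun x hx => by simp [inf'_eq_zero_of_mem_stdFaceBoundary hJ hx])
    ((continuousOn_radialProjection hJ).mono fun x hx => hcollar x hx.2)
    (fun x hx => radialProjection_mem_stdFaceBoundary hJ hx.1 (hcollar x hx.2))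
    (fun x hx => radialProjection_eq_self hJ hx) (fun x hx => hx.1) hf hfY

end Extension

section Skeleton

open Set Finset

variable {ι X : Type*} [Fintype ι] {k : ℕ}

theorem exists_eqOn_stdFace_of_card_eq {f : (ι → ℝ) → X} {g : Finset ι → (ι → ℝ) → X}
    (hg : ∀ J : Finset ι, #J = k + 1 → EqOn (g J) f (stdFaceBoundary (J : Set ι))) :
    ∃ F : (ι → ℝ) → X, (∀ J : Finset ι, #J ≤ k → EqOn F f (stdFace (J : Set ι))) ∧
      ∀ J : Finset ι, #J = k + 1 → EqOn F (g J) (stdFace (J : Set ι)) := by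
  classical
  let supp : (ι → ℝ) → Finset ι := fun x => {i | x i ≠ 0}
  have hsupp (J : Finset ι) (x : ι → ℝ) (hx : x ∈ stdFace (J : Set ι)) : supp x ⊆ J := by
    intro i hi
    by_contra hiJ
    exact (Finset.mem_filter.1 hi).2 (hx.2 i hiJ)
  refine ⟨fun x => if #(supp x) = k + 1 then g (supp x) x else f x, fun J hJ x hx => if_neg ?_,
    fun J hJ x hx => ?_⟩
  · have := Finset.card_le_card (hsupp J x hx)
    omega
  · rcases (hsupp J x hx).eq_or_ssubset with heq | hss
    · simp only [heq, if_pos hJ]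
    · obtain ⟨i, hiJ, hi⟩ := Finset.exists_of_ssubset hss
      have hxi : x i = 0 := by simpa [supp] using hi
      simp only [if_neg (hJ ▸ (Finset.card_lt_card hss).ne)]
      exact (hg J hJ ⟨hx, i, hiJ, hxi⟩).symm

variable [TopologicalSpace X] {B : Finset ι → Set X}

theorem continuousOn_mapsTo_stdFaceBoundary (hmono : Monotone B) {f : (ι → ℝ) → X}
    (hf : ∀ J : Finset ι, #J ≤ k →
      ContinuousOn f (stdFace (J : Set ι)) ∧ MapsTo f (stdFace (J : Set ι)) (B J))
    {J : Finset ι} (hJ : #J = k + 1) :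
    ContinuousOn f (stdFaceBoundary (J : Set ι)) ∧
      MapsTo f (stdFaceBoundary (J : Set ι)) (B J) := by
  classical
  have hfacet (i : J) : ContinuousOn f (stdFace ((J : Set ι) \ {i.1})) ∧
      MapsTo f (stdFace ((J : Set ι) \ {i.1})) (B (J.erase i)) := by
    rw [← Finset.coe_erase]
    exact hf _ (by rw [Finset.card_erase_of_mem i.2]; omega)
  rw [stdFaceBoundary_eq_iUnion]
  exact ⟨(locallyFinite_of_finite _).continuousOn_iUnion (fun i => isClosed_stdFace _)
      fun i => (hfacet i).1,
    mapsTo_iUnion.2 fun i => (hfacet i).2.mono_right (hmono (Finset.erase_subset i.1 J))⟩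

theorem exists_continuousOn_mapsTo_stdFace [Nonempty X]
    (hB : ∀ J : Finset ι, J.Nonempty → ContractibleSpace (B J)) (hmono : Monotone B) (k : ℕ) :
    ∃ f : (ι → ℝ) → X, ∀ J : Finset ι, #J ≤ k →
      ContinuousOn f (stdFace (J : Set ι)) ∧ MapsTo f (stdFace (J : Set ι)) (B J) := by
  induction k with
  | zero =>
    refine ⟨fun _ => Classical.arbitrary X, fun J hJ => ⟨continuousOn_const, fun x hx => ?_⟩⟩
    have hne := nonempty_of_mem_stdFace hx
    rw [Finset.card_eq_zero.1 (Nat.le_zero.1 hJ)] at hne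
    simp at hne
  | succ k ih =>
    obtain ⟨f, hf⟩ := ih
    have hextend (J : Finset ι) (hJ : #J = k + 1) : ∃ g : (ι → ℝ) → X,
        ContinuousOn g (stdFace (J : Set ι)) ∧ MapsTo g (stdFace (J : Set ι)) (B J) ∧
          EqOn g f (stdFaceBoundary (J : Set ι)) := by
      have hJne : J.Nonempty := Finset.card_pos.1 (by omega)
      have := hB J hJne
      obtain ⟨hcont, hmaps⟩ := continuousOn_mapsTo_stdFaceBoundary hmono hf hJ
      exact exists_continuousOn_extension_stdFace hJne hcont hmaps
    choose! g hgcont hgmaps hgf using hextend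
    obtain ⟨F, hFf, hFg⟩ := exists_eqOn_stdFace_of_card_eq hgf
    refine ⟨F, fun J hJ => ?_⟩
    rcases hJ.lt_or_eq with hlt | hcard
    · have heq := hFf J (Nat.lt_succ_iff.1 hlt)
      obtain ⟨hcont, hmaps⟩ := hf J (Nat.lt_succ_iff.1 hlt)
      exact ⟨hcont.congr heq, hmaps.congr heq.symm⟩
    · exact ⟨(hgcont J hcard).congr (hFg J hcard), (hgmaps J hcard).congr (hFg J hcard).symm⟩

end Skeleton

section Helly

open Set Finset

variable {ι : Type*} [Fintype ι]

theorem exists_continuousMap_facets_mapsTo {X : Type*} [TopologicalSpace X] [Nonempty ι]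
    {A : ι → Set X} (hA : ∀ s : Finset ι, s ≠ Finset.univ → ContractibleSpace ↥(⋂ i ∈ s, A i)) :
    ∃ F : C(stdSimplex ℝ ι, X), ∀ i x, x.1 i = 0 → F x ∈ A i := by
  classical
  have := hA ∅ Finset.univ_nonempty.ne_empty.symm
  have : Nonempty X := (inferInstance : Nonempty ↥(⋂ i ∈ (∅ : Finset ι), A i)).map (·.1)
  have hB (J : Finset ι) (hJ : J.Nonempty) : ContractibleSpace ↥(⋂ i ∈ Jᶜ, A i) :=
    hA Jᶜ (by simpa [Finset.compl_eq_univ_iff] using hJ.ne_empty)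
  have hmono : Monotone fun J : Finset ι => ⋂ i ∈ Jᶜ, A i := fun I J hIJ =>
    biInter_mono (Finset.compl_subset_compl.2 hIJ) fun _ _ => le_rfl
  obtain ⟨f, hf⟩ := exists_continuousOn_mapsTo_stdFace hB hmono (Fintype.card ι)
  have hcont : ContinuousOn f (stdSimplex ℝ ι) := by
    simpa only [Finset.coe_univ, stdFace_univ] using (hf Finset.univ le_rfl).1
  refine ⟨⟨_, continuousOn_iff_continuous_domRestrict.1 hcont⟩, fun i x hxi => ?_⟩
  have hx : x.1 ∈ stdFace (({i}ᶜ : Finset ι) : Set ι) := ⟨x.2, fun j hj => by simp_all⟩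
  simpa using (hf {i}ᶜ (Finset.card_le_univ _)).2 hx

variable {X : Type} [TopologicalSpace X] [T2Space X] {n : ℕ}

theorem CompactTopDimLE.nonempty_iInter_of_contractible (hdim : CompactTopDimLE X n)
    (hcard : n + 1 < Fintype.card ι) {A : ι → Set X}
    (hA : ∀ s : Finset ι, s ≠ Finset.univ → ContractibleSpace ↥(⋂ i ∈ s, A i)) :
    (⋂ i, A i).Nonempty := by
  have : Nonempty ι := Fintype.card_pos_iff.1 (by omega)
  obtain ⟨F, hF⟩ := exists_continuousMap_facets_mapsTo hA
  refine (hdim.nonempty_iInter_image_facets hcard F).mono (iInter_mono fun i => ?_)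
  rintro _ ⟨x, hx, rfl⟩
  exact hF i x hx

theorem topological_helly_base_general (hdim : CompactTopDimLE X n)
    (hcard : n + 1 ≤ Fintype.card ι) (A : ι → Set X)
    (hconn : ∀ s : Finset ι, ContractibleSpace ↥(⋂ i ∈ s, A i) ∨ (⋂ i ∈ s, A i) = ∅)
    (hinter : ∀ s : Finset ι, #s = n + 1 → (⋂ i ∈ s, A i).Nonempty) :
    (⋂ i, A i).Nonempty := by
  suffices h : ∀ s : Finset ι, (⋂ i ∈ s, A i).Nonempty by simpa using h Finset.univ
  intro s
  induction s using Finset.strongInduction with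
  | H s ih =>
    rcases le_or_gt #s (n + 1) with hs | hs
    · obtain ⟨t, hst, ht⟩ := Finset.exists_superset_card_eq hs hcard
      exact (hinter t ht).mono (biInter_mono hst fun _ _ => le_rfl)
    · have hproper (t : Finset s) (ht : t ≠ Finset.univ) : ContractibleSpace ↥(⋂ i ∈ t, A i) := by
        have hts : t.map (.subtype _) ⊂ s := by
          obtain ⟨i, hi⟩ := not_forall.1 (mt Finset.eq_univ_iff_forall.2 ht)
          exact (Finset.ssubset_iff_of_subset (Finset.map_subtype_subset t)).2
            ⟨i, i.2, by simpa using hi⟩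
        have heq : ⋂ i ∈ t.map (.subtype _), A i = ⋂ i ∈ t, A i := by
          ext x
          simp
        rw [← heq]
        exact (hconn _).resolve_right (ih _ hts).ne_empty
      have := hdim.nonempty_iInter_of_contractible (ι := s) (by simpa using hs) hproper
      simpa [iInter_subtype] using this

end Helly

/-- Base case of the topological Helly theorem: in a contractible Hausdorff space of
compact topological dimension at most `n`, if `n + 2` contractible sets, all of whose
subfamily intersections are contractible or empty, are such that every `n + 1` of them
have a common point, then all `n + 2` of them have a common point. -/
theorem topological_helly_base (n : ℕ) (hn : 1 ≤ n)
    {X : Type} [TopologicalSpace X] [T2Space X] [ContractibleSpace X]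
    (hdim : CompactTopDimLE X n)
    (A : Fin (n + 2) → Set X)
    (hA : ∀ i : Fin (n + 2), ContractibleSpace (A i))
    (hconn : ∀ s : Finset (Fin (n + 2)),
      ContractibleSpace ↥(⋂ i ∈ s, A i) ∨ (⋂ i ∈ s, A i) = ∅)
    (hinter : ∀ s : Finset (Fin (n + 2)), s.card = n + 1 → (⋂ i ∈ s, A i).Nonempty) :
    (⋂ i, A i).Nonempty := by
  exact topological_helly_base_general hdim (by simp) A hconn hinter
end

section
/- Let n ≥ 1, let Δ denote the standard (n+1)-dimensional simplex, the convex hull of the standard basis e₁, …, e_{n+2} of ℝ^{n+2}, and let F_i denote its i-th n-dimensional face, consisting of the points of Δ whose i-th coordinate is zero. If G₁, …, G_{n+2} are open subsets of Δ (in the subspace topology) that cover Δ and satisfy G_i ∩ F_i = ∅ for each i ∈ {1, …, n+2}, then ⋂_{i=1}^{n+2} G_i is nonempty. -/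
/-!
A Lebesgue number `δ` of the cover lets us label each point `x` of the simplex by an index `i` with
`δ ≤ x i` and `ball x δ ⊆ G i`. It remains to find points of the grid of mesh `1 / N`, at distance
at most `card ι / N` from each other, that carry all the labels.

Instead of a triangulation we use Scarf's dominant sets: the grid points are ranked by each
coordinate, and one dummy point is added beyond each facet. A surjection from `n + 1` elements onto
`n` elements remains surjective after the removal of exactly two elements. Applied to the colours of
a room, this shows that a room that is not rainbow has no doors or two; applied to the lowest points
of a door, it shows that every dominant door other than the outer one lies in two rooms. As the
outer door lies in a single room, parity gives a rainbow room.

Dominance keeps the grid points of that room close to each other, and close to the `j`-th facet if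
it contains the `j`-th dummy, so that the label `j` is then not taken by a grid point. If the
dummies are coloured by a cyclic permutation `σ`, the set `J` of dummies of the room therefore
satisfies `J ⊆ σ(J)`. As a dominant set cannot contain all dummies, `J` is empty, and all labels
occur on grid points of the room.
-/

open Finset

section Counting

theorem image_erase_eq_image {α β : Type*} [DecidableEq α] [DecidableEq β] {s : Finset α}
    {f : α → β} {x y : α} (hy : y ∈ s) (hxy : x ≠ y) (h : f x = f y) :
    (s.erase x).image f = s.image f := by
  refine (image_subset_image (erase_subset x s)).antisymm fun b hb ↦ ?_
  obtain ⟨z, hz, rfl⟩ := mem_image.1 hb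
  by_cases hzx : z = x
  · exact mem_image.2 ⟨y, mem_erase.2 ⟨hxy.symm, hy⟩, by rw [hzx, h]⟩
  · exact mem_image_of_mem f (mem_erase.2 ⟨hzx, hz⟩)

theorem card_filter_image_erase_eq_two {α β : Type*} [DecidableEq α] [DecidableEq β]
    {s : Finset α} {f : α → β} (hs : #s = #(s.image f) + 1) :
    #{x ∈ s | (s.erase x).image f = s.image f} = 2 := by
  obtain ⟨a, ha, b, hb, hab, hfab⟩ := exists_ne_map_eq_of_card_lt_of_maps_to
    (by lia : #(s.image f) < #s) fun _ hx ↦ mem_image_of_mem f hx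
  have image_erase_a : (s.erase a).image f = s.image f := image_erase_eq_image hb hab hfab
  have injOn_erase_a : Set.InjOn f (s.erase a) := by
    rw [← card_image_iff, image_erase_a, card_erase_of_mem ha, hs, Nat.add_sub_cancel]
  refine card_eq_two.2 ⟨a, b, hab, ext fun x ↦ ?_⟩
  simp only [mem_filter, mem_insert, mem_singleton]
  constructor
  · rintro ⟨hx, image_erase_x⟩
    obtain ⟨y, hy, hyx⟩ := mem_image.1 (image_erase_x ▸ mem_image_of_mem f hx)
    obtain ⟨hne, hys⟩ := mem_erase.1 hy
    by_contra! hxab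
    have hxa : x ∈ s.erase a := mem_erase.2 ⟨hxab.1, hx⟩
    by_cases hya : y = a
    · exact hxab.2 (injOn_erase_a hxa (mem_erase.2 ⟨hab.symm, hb⟩) (by rw [← hyx, hya, hfab]))
    · exact hne (injOn_erase_a (mem_erase.2 ⟨hya, hys⟩) hxa hyx)
  · rintro (rfl | rfl)
    · exact ⟨ha, image_erase_a⟩
    · exact ⟨hb, image_erase_eq_image ha hab.symm hfab.symm⟩

variable {V ι : Type*} [Fintype V] [Fintype ι] [DecidableEq ι]

/-- The doors of colour `k`: the sets whose points carry each colour other than `k` exactly once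
and do not carry the colour `k`. -/
def doors (c : V → ι) (k : ι) : Finset (Finset V) :=
  {D | #D + 1 = Fintype.card ι ∧ D.image c = univ.erase k}

theorem mem_doors {c : V → ι} {k : ι} {D : Finset V} :
    D ∈ doors c k ↔ #D + 1 = Fintype.card ι ∧ D.image c = univ.erase k := by
  simp [doors]

variable [DecidableEq V]

theorem card_filter_doors_subset {R : Finset V} (hR : #R = Fintype.card ι) (c : V → ι) (k : ι) :
    #{D ∈ doors c k | D ⊆ R} = #{x ∈ R | (R.erase x).image c = univ.erase k} := by
  rw [← card_image_of_injOn ((erase_injOn R).mono (coe_subset.2 (filter_subset _ R)))]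
  congr 1
  ext D
  simp only [mem_filter, mem_doors, mem_image]
  constructor
  · rintro ⟨⟨hcard, hcol⟩, hDR⟩
    obtain ⟨x, hx, rfl⟩ := exists_eq_insert_iff.2 ⟨hDR, hcard.trans hR.symm⟩
    have erase_eq : (insert x D).erase x = D := erase_insert hx
    exact ⟨x, ⟨mem_insert_self x D, by rw [erase_eq, hcol]⟩, erase_eq⟩
  · rintro ⟨x, ⟨hx, hcol⟩, rfl⟩
    exact ⟨⟨by rw [card_erase_add_one hx, hR], hcol⟩, erase_subset x R⟩

theorem even_card_filter_doors_subset {R : Finset V} (hR : #R = Fintype.card ι) {c : V → ι}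
    (hc : R.image c ≠ univ) (k : ι) : Even #{D ∈ doors c k | D ⊆ R} := by
  rw [card_filter_doors_subset hR]
  obtain hempty | ⟨x, hx⟩ := ({x ∈ R | (R.erase x).image c = univ.erase k}).eq_empty_or_nonempty
  · simp [hempty]
  obtain ⟨hxR, hcol⟩ := mem_filter.1 hx
  have image_eq_insert : R.image c = insert (c x) (univ.erase k) := by
    rw [← hcol, ← image_insert, insert_erase hxR]
  have hcx : c x ≠ k := by
    rintro rfl
    exact hc (by rw [image_eq_insert, insert_erase (mem_univ _)])
  have image_eq : R.image c = univ.erase k := by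
    rw [image_eq_insert, insert_eq_of_mem (mem_erase.2 ⟨hcx, mem_univ _⟩)]
  have hcard : #R = #(R.image c) + 1 := by
    rw [image_eq, card_erase_add_one (mem_univ k), hR, card_univ]
  rw [← image_eq, card_filter_image_erase_eq_two hcard]
  exact even_two

theorem exists_image_eq_univ_of_odd_of_even {𝓡 : Finset (Finset V)}
    (h𝓡 : ∀ R ∈ 𝓡, #R = Fintype.card ι) {c : V → ι} {k : ι} {D₀ : Finset V}
    (hD₀ : D₀ ∈ doors c k) (hodd : Odd #{R ∈ 𝓡 | D₀ ⊆ R})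
    (heven : ∀ D ∈ doors c k, D ≠ D₀ → Even #{R ∈ 𝓡 | D ⊆ R}) :
    ∃ R ∈ 𝓡, R.image c = univ := by
  by_contra! hcon
  have double_count := sum_card_bipartiteAbove_eq_sum_card_bipartiteBelow (s := doors c k) (t := 𝓡)
    fun D R ↦ D ⊆ R
  simp only [bipartiteAbove, bipartiteBelow] at double_count
  have even_by_rooms : Even (∑ R ∈ 𝓡, #{D ∈ doors c k | D ⊆ R}) :=
    even_sum _ fun R hR ↦ even_card_filter_doors_subset (h𝓡 R hR) (hcon R hR) k
  have odd_by_doors : Odd (∑ D ∈ doors c k, #{R ∈ 𝓡 | D ⊆ R}) := by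
    rw [← add_sum_erase _ _ hD₀]
    exact hodd.add_even <| even_sum _ fun D hD ↦
      heven D (mem_of_mem_erase hD) (ne_of_mem_erase hD)
  rw [double_count] at odd_by_doors
  exact Nat.not_even_iff_odd.2 odd_by_doors even_by_rooms

end Counting

section Dominance

variable {V ι α : Type*} [LinearOrder α] {u : ι → V → α} {D : Finset V}

/-- `R` is dominant for the family of rankings `u` if no point of `V` lies above the lowest point of
`R` in every ranking. Dominant sets play the role of the simplices of a triangulation. -/
def IsDominant (u : ι → V → α) (R : Finset V) : Prop :=
  ∀ y, ∃ i, ∀ x ∈ R, u i y ≤ u i x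

/-- The family `m` chooses in each ranking a lowest point of `D`. -/
def IsArgmin (u : ι → V → α) (D : Finset V) (m : ι → V) : Prop :=
  ∀ i, m i ∈ D ∧ ∀ x ∈ D, u i (m i) ≤ u i x

/-- `y` lies above the lowest point of `D` in every ranking except possibly the `j`-th. -/
def ExceedsOff (u : ι → V → α) (D : Finset V) (j : ι) (y : V) : Prop :=
  ∀ i ≠ j, ∃ z ∈ D, u i z < u i y

/-- `x` is a point ranked highest by `u j` among those exceeding `D` off `j`. Adding it to a
dominant set `D` yields a dominant set, of which it is the lowest point for `u j`. -/
def IsPivot (u : ι → V → α) (D : Finset V) (j : ι) (x : V) : Prop :=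
  ExceedsOff u D j x ∧ ∀ y, ExceedsOff u D j y → u j y ≤ u j x

open Classical in
/-- The rooms: dominant sets with as many points as there are rankings, the analogue of the
top-dimensional simplices of a triangulation. -/
noncomputable def rooms [Fintype V] [Fintype ι] (u : ι → V → α) : Finset (Finset V) :=
  {R | #R = Fintype.card ι ∧ IsDominant u R}

theorem mem_rooms [Fintype V] [Fintype ι] {R : Finset V} :
    R ∈ rooms u ↔ #R = Fintype.card ι ∧ IsDominant u R := by
  simp [rooms]

theorem IsDominant.mono {R : Finset V} (hR : IsDominant u R) (hDR : D ⊆ R) : IsDominant u D :=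
  fun y ↦ (hR y).imp fun _ hi x hx ↦ hi x (hDR hx)

theorem exists_isArgmin (u : ι → V → α) (hD : D.Nonempty) : ∃ m, IsArgmin u D m := by
  choose m hmem hmin using fun i ↦ D.exists_min_image (u i) hD
  exact ⟨m, fun i ↦ ⟨hmem i, hmin i⟩⟩

theorem exists_isPivot [Finite V] {j : ι} (h : ∃ y, ExceedsOff u D j y) :
    ∃ x, IsPivot u D j x := by
  obtain ⟨x, hx, hmax⟩ := Set.exists_max_image {y | ExceedsOff u D j y} (u j) (Set.toFinite _) h
  exact ⟨x, hx, hmax⟩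

theorem IsPivot.unique {j : ι} {x y : V} (hu : Function.Injective (u j)) (hx : IsPivot u D j x)
    (hy : IsPivot u D j y) : x = y :=
  hu ((hy.2 x hx.1).antisymm (hx.2 y hy.1))

theorem IsDominant.forall_le_of_exceedsOff (hD : IsDominant u D) {j : ι} {x : V}
    (hx : ExceedsOff u D j x) : ∀ z ∈ D, u j x ≤ u j z := by
  obtain ⟨i, hi⟩ := hD x
  obtain rfl | hij := eq_or_ne i j
  · exact hi
  · obtain ⟨z, hz, hzx⟩ := hx i hij
    exact absurd (hi z hz) hzx.not_ge

theorem IsDominant.index_eq_of_exceedsOff (hD : IsDominant u D) {j l : ι} {x : V}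
    (hj : ExceedsOff u D j x) (hl : ExceedsOff u D l x) : j = l := by
  by_contra hjl
  obtain ⟨z, hz, hzx⟩ := hl j hjl
  exact (hD.forall_le_of_exceedsOff hj z hz).not_gt hzx

variable [DecidableEq V]

theorem IsPivot.isDominant_insert {j : ι} {x : V} (hx : IsPivot u D j x) (hD : IsDominant u D) :
    IsDominant u (insert x D) := by
  intro y
  by_cases hy : ExceedsOff u D j y
  · exact ⟨j, (forall_mem_insert ..).2 ⟨hx.2 y hy, hD.forall_le_of_exceedsOff hy⟩⟩
  · simp only [ExceedsOff, not_forall, not_exists, not_and, not_lt] at hy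
    obtain ⟨i, hij, hi⟩ := hy
    obtain ⟨z, hz, hzx⟩ := hx.1 i hij
    exact ⟨i, (forall_mem_insert ..).2 ⟨(hi z hz).trans hzx.le, hi⟩⟩

variable [Fintype ι]

theorem IsArgmin.image_eq {m : ι → V} (hm : IsArgmin u D m) (hu : ∀ i, Function.Injective (u i))
    (hD : IsDominant u D) : univ.image m = D := by
  refine (image_subset_iff.2 fun i _ ↦ (hm i).1).antisymm fun x hx ↦ ?_
  obtain ⟨i, hi⟩ := hD x
  exact mem_image.2 ⟨i, mem_univ i, hu i (((hm i).2 x hx).antisymm (hi _ (hm i).1))⟩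

theorem IsArgmin.notMem_of_exceedsOff [DecidableEq ι] {m : ι → V} (hm : IsArgmin u D m) {j : ι}
    (hj : (univ.erase j).image m = D) {x : V} (hx : ExceedsOff u D j x) : x ∉ D := by
  intro hxD
  rw [← hj] at hxD
  obtain ⟨i, hi, rfl⟩ := mem_image.1 hxD
  obtain ⟨z, hz, hlt⟩ := hx i (ne_of_mem_erase hi)
  exact ((hm i).2 z hz).not_gt hlt

theorem IsArgmin.exists_isPivot_of_isDominant_insert [DecidableEq ι] {m : ι → V}
    (hm : IsArgmin u D m) (hu : ∀ i, Function.Injective (u i)) (hcard : #D + 1 = Fintype.card ι)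
    {x : V} (hx : x ∉ D) (hR : IsDominant u (insert x D)) :
    ∃ j, (univ.erase j).image m = D ∧ IsPivot u D j x := by
  obtain ⟨j, hj⟩ := hR x
  -- Every point of `D` stays lowest in some ranking after `x` is added, and that ranking is not
  -- the `j`-th, where `x` has become the lowest point.
  have exists_argmin_lt : ∀ d ∈ D, ∃ i ≠ j, m i = d ∧ u i d < u i x := by
    intro d hd
    obtain ⟨i, hi⟩ := hR d
    obtain ⟨hix, hiD⟩ := (forall_mem_insert ..).1 hi
    have hdx : d ≠ x := fun h ↦ hx (h ▸ hd)
    refine ⟨i, ?_, hu i (((hm i).2 d hd).antisymm (hiD _ (hm i).1)), hix.lt_of_ne ((hu i).ne hdx)⟩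
    rintro rfl
    exact hdx (hu i (hix.antisymm (hj d (mem_insert_of_mem hd))))
  have image_erase : (univ.erase j).image m = D := by
    refine (image_subset_iff.2 fun i _ ↦ (hm i).1).antisymm fun d hd ↦ ?_
    obtain ⟨i, hij, hid, -⟩ := exists_argmin_lt d hd
    exact mem_image.2 ⟨i, mem_erase.2 ⟨hij, mem_univ i⟩, hid⟩
  have injOn_erase : Set.InjOn m (univ.erase j) := by
    rw [← card_image_iff, image_erase, card_erase_of_mem (mem_univ j), card_univ, ← hcard,
      Nat.add_sub_cancel]
  refine ⟨j, image_erase, fun i hij ↦ ?_, fun y hy ↦ ?_⟩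
  · obtain ⟨l, hlj, hl, hlt⟩ := exists_argmin_lt (m i) (hm i).1
    obtain rfl : l = i := injOn_erase (by simpa using hlj) (by simpa using hij) hl
    exact ⟨m l, (hm l).1, hlt⟩
  · obtain ⟨i, hi⟩ := hR y
    obtain ⟨hyx, hyD⟩ := (forall_mem_insert ..).1 hi
    obtain rfl | hij := eq_or_ne i j
    · exact hyx
    · obtain ⟨z, hz, hlt⟩ := hy i hij
      exact absurd (hyD z hz) hlt.not_ge

theorem card_filter_rooms_superset_eq_two [Fintype V] (hu : ∀ i, Function.Injective (u i))
    (hD : IsDominant u D) (hne : D.Nonempty) (hcard : #D + 1 = Fintype.card ι)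
    (hexceed : ∀ j, ∃ y, ExceedsOff u D j y) : #{R ∈ rooms u | D ⊆ R} = 2 := by
  classical
  obtain ⟨m, hm⟩ := exists_isArgmin u hne
  have image_m := hm.image_eq hu hD
  choose x hx using fun j ↦ exists_isPivot (hexceed j)
  have two_indices : #{j | (univ.erase j).image m = D} = 2 := by
    simpa only [image_m] using card_filter_image_erase_eq_two (s := univ) (f := m)
      (by rw [image_m, card_univ, hcard])
  have notMem {j : ι} (hj : (univ.erase j).image m = D) : x j ∉ D :=
    hm.notMem_of_exceedsOff hj (hx j).1
  rw [← two_indices]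
  symm
  refine card_nbij (fun j ↦ insert (x j) D) (fun j hj ↦ ?_) (fun j hj l _ h ↦ ?_) fun R hR ↦ ?_
  · have hj : (univ.erase j).image m = D := by simpa using hj
    exact mem_filter.2 ⟨mem_rooms.2 ⟨by rw [card_insert_of_notMem (notMem hj), hcard],
      (hx j).isDominant_insert hD⟩, subset_insert _ _⟩
  · have hj : (univ.erase j).image m = D := by simpa using hj
    have hxjl : x j = x l := (insert_inj (notMem hj)).1 h
    exact hD.index_eq_of_exceedsOff (hx j).1 (hxjl ▸ (hx l).1)
  · obtain ⟨hR, hDR⟩ := mem_filter.1 hR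
    obtain ⟨hRcard, hRdom⟩ := mem_rooms.1 hR
    obtain ⟨y, hy, rfl⟩ := exists_eq_insert_iff.2 ⟨hDR, hcard.trans hRcard.symm⟩
    obtain ⟨j, hj, hpivot⟩ := hm.exists_isPivot_of_isDominant_insert hu hcard hy hRdom
    exact ⟨j, by simpa using hj, by simp only [(hx j).unique (hu j) hpivot]⟩

end Dominance

section Scarf

variable {T ι α : Type*} [LinearOrder α]

/-- The rankings in `u` are strict and rank, besides the points of `T`, one dummy point per ranking:
`u i` puts the `i`-th dummy below all points of `T` and the other dummies above them. The dummies
stand for points outside the simplex, the `i`-th one beyond the `i`-th facet. -/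
structure IsDummyRanking (u : ι → T ⊕ ι → α) : Prop where
  injective : ∀ i, Function.Injective (u i)
  dummy_lt : ∀ i t, u i (.inr i) < u i (.inl t)
  lt_dummy : ∀ {i j}, j ≠ i → ∀ t, u i (.inl t) < u i (.inr j)

variable {u : ι → T ⊕ ι → α}

theorem IsDummyRanking.dummy_le [Nonempty T] (hu : IsDummyRanking u) (i : ι) (x : T ⊕ ι) :
    u i (.inr i) ≤ u i x := by
  obtain ⟨t⟩ := ‹Nonempty T›
  obtain s | j := x
  · exact (hu.dummy_lt i s).le
  · obtain rfl | hij := eq_or_ne j i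
    · exact le_rfl
    · exact ((hu.dummy_lt i t).trans (hu.lt_dummy hij t)).le

theorem IsDummyRanking.exists_dummy_notMem (hu : IsDummyRanking u) {R : Finset (T ⊕ ι)}
    (hR : IsDominant u R) (t : T) : ∃ i, .inr i ∉ R ∧ ∀ x ∈ R, u i (.inl t) ≤ u i x := by
  obtain ⟨i, hi⟩ := hR (.inl t)
  exact ⟨i, fun hmem ↦ (hi _ hmem).not_gt (hu.dummy_lt i t), hi⟩

theorem IsDummyRanking.exceedsOff_dummy (hu : IsDummyRanking u) {D : Finset (T ⊕ ι)} {t : T}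
    (ht : .inl t ∈ D) (j : ι) : ExceedsOff u D j (.inr j) :=
  fun _ hij ↦ ⟨.inl t, ht, hu.lt_dummy hij.symm t⟩

variable [Fintype ι] [DecidableEq ι]

/-- The only door through which one can enter the rooms from outside: all dummies but the `k`-th. -/
def outerDoor (T : Type*) (k : ι) : Finset (T ⊕ ι) :=
  (univ.erase k).map .inr

theorem inr_mem_outerDoor {j k : ι} : (.inr j : T ⊕ ι) ∈ outerDoor T k ↔ j ≠ k := by
  simp [outerDoor]

theorem inl_notMem_outerDoor {t : T} {k : ι} : (.inl t : T ⊕ ι) ∉ outerDoor T k := by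
  simp [outerDoor]

theorem card_outerDoor_add_one (k : ι) : #(outerDoor T k) + 1 = Fintype.card ι := by
  rw [outerDoor, card_map, card_erase_add_one (mem_univ k), card_univ]

theorem outerDoor_mem_doors [Fintype T] {c : T ⊕ ι → ι} (hc : Function.Injective (c ∘ .inr))
    (k : ι) : outerDoor T k ∈ doors c (c (.inr k)) := by
  classical
  refine mem_doors.2 ⟨card_outerDoor_add_one k, ?_⟩
  have image_univ : univ.image (c ∘ .inr) = univ :=
    image_univ_of_surjective (Finite.injective_iff_surjective.1 hc)
  rw [outerDoor, map_eq_image, image_image]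
  exact (image_erase hc univ k).trans (by rw [image_univ, Function.comp_apply])

theorem exists_inl_mem_of_ne_outerDoor [Fintype T] {c : T ⊕ ι → ι} {k : ι} {D : Finset (T ⊕ ι)}
    (hD : D ∈ doors c (c (.inr k))) (hne : D ≠ outerDoor T k) : ∃ t, .inl t ∈ D := by
  obtain ⟨hcard, hcol⟩ := mem_doors.1 hD
  by_contra! hdummies
  refine hne (eq_of_subset_of_card_le ?_ (by linarith [card_outerDoor_add_one (T := T) k]))
  rintro (t | j) hx
  · exact absurd hx (hdummies t)
  · refine inr_mem_outerDoor.2 ?_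
    rintro rfl
    exact ne_of_mem_erase (hcol ▸ mem_image_of_mem c hx) rfl

theorem IsDummyRanking.isDominant_insert_outerDoor_iff [DecidableEq T] [Nonempty T]
    (hu : IsDummyRanking u) {k : ι} {t : T} :
    IsDominant u (insert (.inl t) (outerDoor T k)) ↔ ∀ s, u k (.inl s) ≤ u k (.inl t) := by
  constructor
  · intro hdom s
    obtain ⟨i, hi, hle⟩ := hu.exists_dummy_notMem hdom s
    obtain rfl : i = k := by
      by_contra hik
      exact hi (mem_insert_of_mem (inr_mem_outerDoor.2 hik))
    exact hle _ (mem_insert_self ..)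
  · rintro hmax (s | j)
    · refine ⟨k, (forall_mem_insert ..).2 ⟨hmax s, ?_⟩⟩
      rintro (r | j) hj
      · exact absurd hj inl_notMem_outerDoor
      · exact (hu.lt_dummy (inr_mem_outerDoor.1 hj) s).le
    · exact ⟨j, fun x _ ↦ hu.dummy_le j x⟩

theorem IsDummyRanking.card_filter_rooms_outerDoor_subset [Fintype T] [DecidableEq T]
    [Nonempty T] (hu : IsDummyRanking u) (k : ι) : #{R ∈ rooms u | outerDoor T k ⊆ R} = 1 := by
  obtain ⟨t, ht⟩ := Finite.exists_max fun t ↦ u k (.inl t)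
  refine card_eq_one.2 ⟨insert (.inl t) (outerDoor T k), ext fun R ↦ ?_⟩
  simp only [mem_filter, mem_rooms, mem_singleton]
  constructor
  · rintro ⟨⟨hcard, hdom⟩, hsub⟩
    obtain ⟨x, hx, rfl⟩ := exists_eq_insert_iff.2
      ⟨hsub, (card_outerDoor_add_one k).trans hcard.symm⟩
    obtain s | j := x
    · have hs := hu.isDominant_insert_outerDoor_iff.1 hdom
      rw [hu.injective k ((ht s).antisymm (hs t))]
    · obtain rfl : j = k := by simpa [inr_mem_outerDoor] using hx
      obtain ⟨i, hi, -⟩ := hu.exists_dummy_notMem hdom t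
      simp only [mem_insert, inr_mem_outerDoor, Sum.inr.injEq] at hi
      tauto
  · rintro rfl
    exact ⟨⟨by rw [card_insert_of_notMem inl_notMem_outerDoor, card_outerDoor_add_one],
      hu.isDominant_insert_outerDoor_iff.2 ht⟩, subset_insert ..⟩

theorem IsDummyRanking.even_card_filter_rooms_superset [Fintype T] [DecidableEq T]
    (hu : IsDummyRanking u) {D : Finset (T ⊕ ι)} (hcard : #D + 1 = Fintype.card ι) {t : T}
    (ht : .inl t ∈ D) : Even #{R ∈ rooms u | D ⊆ R} := by
  by_cases hD : IsDominant u D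
  · rw [card_filter_rooms_superset_eq_two hu.injective hD ⟨_, ht⟩ hcard
      fun j ↦ ⟨_, hu.exceedsOff_dummy ht j⟩]
    exact even_two
  · rw [filter_false_of_mem fun R hR hDR ↦ hD ((mem_rooms.1 hR).2.mono hDR)]
    exact Even.zero

theorem IsDummyRanking.exists_isDominant_image_eq_univ [Finite T] [Nonempty T] [Nonempty ι]
    (hu : IsDummyRanking u) {c : T ⊕ ι → ι} (hc : Function.Injective (c ∘ .inr)) :
    ∃ R, IsDominant u R ∧ R.image c = univ := by
  classical
  have := Fintype.ofFinite T
  obtain ⟨k⟩ := ‹Nonempty ι›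
  have odd_outer : Odd #{R ∈ rooms u | outerDoor T k ⊆ R} :=
    hu.card_filter_rooms_outerDoor_subset k ▸ odd_one
  obtain ⟨R, hR, hcol⟩ := exists_image_eq_univ_of_odd_of_even (fun R hR ↦ (mem_rooms.1 hR).1)
    (outerDoor_mem_doors hc k) odd_outer fun D hD hne ↦
      have ⟨_, ht⟩ := exists_inl_mem_of_ne_outerDoor hD hne
      hu.even_card_filter_rooms_superset (mem_doors.1 hD).1 ht
  exact ⟨R, (mem_rooms.1 hR).2, hcol⟩

end Scarf

section ScoredPoints

variable {T ι β : Type*} [Fintype ι] [DecidableEq ι]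

/-- The ranking of the points of `T` by the score `f i`, with the dummies placed at `⊥` and `⊤` and
ties broken by an arbitrary enumeration. -/
noncomputable def dummyRanking [Fintype T] (f : ι → T → β) (i : ι) (x : T ⊕ ι) :
    WithBot (WithTop β) ×ₗ Fin (Fintype.card (T ⊕ ι)) :=
  toLex (x.elim (fun t ↦ ↑(f i t : WithTop β)) fun j ↦ if j = i then ⊥ else ⊤,
    Fintype.equivFin (T ⊕ ι) x)

variable [LinearOrder β] {f : ι → T → β}

theorem isDummyRanking_dummyRanking [Fintype T] (f : ι → T → β) :
    IsDummyRanking (dummyRanking f) where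
  injective i x y h :=
    (Fintype.equivFin (T ⊕ ι)).injective (congrArg (fun p ↦ (ofLex p).2) h)
  dummy_lt i t := Prod.Lex.toLex_lt_toLex.2 <| .inl <| by simp
  lt_dummy hij t := Prod.Lex.toLex_lt_toLex.2 <| .inl <| by
    simpa [hij] using WithBot.coe_lt_coe.2 (WithTop.coe_lt_top _)

theorem score_le_of_dummyRanking_le [Fintype T] {i : ι} {s t : T}
    (h : dummyRanking f i (.inl s) ≤ dummyRanking f i (.inl t)) : f i s ≤ f i t := by
  contrapose! h
  exact Prod.Lex.toLex_lt_toLex.2 <| .inl <| by simpa using h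

/-- **Scarf's lemma.** `J` is the set of dummies of a rainbow dominant set, the `i`-th dummy having
the colour `σ i`, and `S` is the set of its other points. -/
theorem exists_dominant_image_union_eq_univ [Finite T] [Nonempty T] [Nonempty ι]
    (f : ι → T → β) (c : T → ι) {σ : ι → ι} (hσ : Function.Injective σ) :
    ∃ (S : Finset T) (J : Finset ι),
      S.image c ∪ J.image σ = univ ∧ ∀ t, ∃ i ∉ J, ∀ s ∈ S, f i t ≤ f i s := by
  classical
  have := Fintype.ofFinite T
  have hf := isDummyRanking_dummyRanking f
  obtain ⟨R, hR, hcol⟩ := hf.exists_isDominant_image_eq_univ (c := Sum.elim c σ) hσ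
  refine ⟨R.toLeft, R.toRight, eq_univ_iff_forall.2 fun i ↦ ?_, fun t ↦ ?_⟩
  · obtain ⟨x, hx, rfl⟩ := mem_image.1 (hcol ▸ mem_univ i)
    obtain t | j := x
    · exact mem_union_left _ (mem_image_of_mem c (mem_toLeft.2 hx))
    · exact mem_union_right _ (mem_image_of_mem σ (mem_toRight.2 hx))
  · obtain ⟨i, hi, hle⟩ := hf.exists_dummy_notMem hR t
    exact ⟨i, by simpa using hi, fun s hs ↦
      score_le_of_dummyRanking_le (hle _ (mem_toLeft.1 hs))⟩

end ScoredPoints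

section Grid

variable {ι : Type*} [Fintype ι] [DecidableEq ι] {N : ℕ}

/-- The points of the simplex whose barycentric coordinates are multiples of `1 / N`, scaled by
`N`. -/
abbrev SimplexGrid (ι : Type*) [Fintype ι] [DecidableEq ι] (N : ℕ) : Type _ :=
  {a : ι → ℕ // a ∈ piAntidiag univ N}

theorem SimplexGrid.sum_eq (a : SimplexGrid ι N) : ∑ i, a.1 i = N :=
  (mem_piAntidiag.1 a.2).1

theorem SimplexGrid.exists_ge [Nonempty ι] {g : ι → ℕ} (hg : ∑ i, g i ≤ N) :
    ∃ a : SimplexGrid ι N, g ≤ a.1 := by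
  obtain ⟨k⟩ := ‹Nonempty ι›
  refine ⟨⟨g + Pi.single k (N - ∑ i, g i), ?_⟩, le_self_add⟩
  simp [sum_add_distrib, Nat.add_sub_cancel' hg]

instance [Nonempty ι] : Nonempty (SimplexGrid ι N) :=
  have ⟨a, _⟩ := SimplexGrid.exists_ge (g := (0 : ι → ℕ)) (by simp : _ ≤ N)
  ⟨a⟩

theorem SimplexGrid.exists_floor_of_dominant {S : Finset (SimplexGrid ι N)} (hS : S.Nonempty)
    {J : Finset ι} (hdom : ∀ a : SimplexGrid ι N, ∃ i ∉ J, ∀ s ∈ S, a.1 i ≤ s.1 i) :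
    ∃ q : ι → ℕ, (∀ i ∈ J, q i = 0) ∧ ∀ s ∈ S, ∀ i, q i ≤ s.1 i ∧ s.1 i < q i + Fintype.card ι := by
  let q (i : ι) : ℕ := if i ∈ J then 0 else S.inf' hS fun s ↦ s.1 i
  have q_le : ∀ s ∈ S, q ≤ s.1 := by
    intro s hs i
    by_cases hi : i ∈ J
    · simp [q, hi]
    · simpa only [q, if_neg hi] using inf'_le (fun s : SimplexGrid ι N ↦ s.1 i) hs
  have lt_sum : N < ∑ i, (q i + 1) := by
    by_contra! hle
    have : Nonempty ι := have ⟨s, _⟩ := hS; ⟨(hdom s).choose⟩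
    obtain ⟨a, ha⟩ := exists_ge hle
    obtain ⟨i, hi, hmin⟩ := hdom a
    have ha_le : a.1 i ≤ q i := by simpa only [q, if_neg hi] using le_inf' hS _ hmin
    exact (ha i).not_gt (Nat.lt_succ_of_le ha_le)
  refine ⟨q, fun i hi ↦ if_pos hi, fun s hs i ↦ ⟨q_le s hs i, ?_⟩⟩
  have excess_le : s.1 i - q i ≤ ∑ j, (s.1 j - q j) :=
    single_le_sum (f := fun j ↦ s.1 j - q j) (fun _ _ ↦ Nat.zero_le _) (mem_univ i)
  have sum_excess : ∑ j, (s.1 j - q j) + ∑ j, q j = N := by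
    rw [← sum_add_distrib, sum_congr rfl fun j _ ↦ Nat.sub_add_cancel (q_le s hs j), s.sum_eq]
  rw [sum_add_distrib, sum_const, card_univ, smul_eq_mul, mul_one] at lt_sum
  lia

theorem eq_univ_of_subset_image_of_isCycleOn {σ : Equiv.Perm ι} (hσ : σ.IsCycleOn Set.univ)
    {J : Finset ι} (hJ : J.Nonempty) (hsub : J ⊆ J.image σ) : J = univ := by
  have image_eq : J.image σ = J := (eq_of_subset_of_card_le hsub card_image_le).symm
  have mapsTo : Set.MapsTo σ J J := fun j hj ↦ by
    simpa [image_eq] using mem_image_of_mem σ hj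
  obtain ⟨j, hj⟩ := hJ
  refine eq_univ_of_forall fun i ↦ ?_
  obtain ⟨n, -, rfl⟩ := hσ.exists_pow_eq' Set.finite_univ (Set.mem_univ j) (Set.mem_univ i)
  rw [Equiv.Perm.coe_pow]
  exact mapsTo.iterate n hj

theorem SimplexGrid.exists_close_of_card_le [Nonempty ι] {c : SimplexGrid ι N → ι}
    (hc : ∀ a : SimplexGrid ι N, Fintype.card ι ≤ a.1 (c a)) :
    ∃ p : ι → SimplexGrid ι N,
      (∀ i, c (p i) = i) ∧ ∀ i j l, (p i).1 l < (p j).1 l + Fintype.card ι := by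
  obtain ⟨σ, hσ, -⟩ := exists_cycleOn (univ : Finset ι)
  rw [coe_univ] at hσ
  obtain ⟨S, J, hcover, hdom⟩ := exists_dominant_image_union_eq_univ
    (fun i (a : SimplexGrid ι N) ↦ a.1 i) c σ.injective
  have J_ne_univ : J ≠ univ := by
    rintro rfl
    obtain ⟨i, hi, -⟩ := hdom (Classical.arbitrary _)
    exact hi (mem_univ i)
  have S_nonempty : S.Nonempty := by
    rw [nonempty_iff_ne_empty]
    rintro rfl
    refine J_ne_univ (eq_univ_of_card J ?_)
    rw [← card_image_of_injective J σ.injective, ← card_univ, ← hcover, image_empty, empty_union]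
  obtain ⟨q, q_zero, hq⟩ := exists_floor_of_dominant S_nonempty hdom
  have c_notMem : ∀ s ∈ S, c s ∉ J := fun s hs hJ ↦ by
    have := hc s
    have := hq s hs (c s)
    have := q_zero _ hJ
    lia
  have J_subset : J ⊆ J.image σ := fun j hj ↦ by
    refine (mem_union.1 (hcover ▸ mem_univ j)).resolve_left fun hjS ↦ ?_
    obtain ⟨s, hs, rfl⟩ := mem_image.1 hjS
    exact c_notMem s hs hj
  have J_empty : J = ∅ := not_nonempty_iff_eq_empty.1 fun hJ ↦
    J_ne_univ (eq_univ_of_subset_image_of_isCycleOn hσ hJ J_subset)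
  have image_c : S.image c = univ := by simpa [J_empty] using hcover
  choose p hpS hp using fun i ↦ mem_image.1 (image_c ▸ mem_univ i)
  refine ⟨p, hp, fun i j l ↦ ?_⟩
  have := hq _ (hpS i) l
  have := hq _ (hpS j) l
  lia

end Grid

section Topology

variable {ι : Type*} [Fintype ι]

theorem exists_le_coord_and_ball_subset {G : ι → Set (stdSimplex ℝ ι)}
    (hopen : ∀ i, IsOpen (G i)) (hcover : ∀ x : stdSimplex ℝ ι, ∃ i, x i ≠ 0 ∧ x ∈ G i) :
    ∃ δ > 0, ∀ x : stdSimplex ℝ ι, ∃ i, δ ≤ x i ∧ Metric.ball x δ ⊆ G i := by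
  classical
  choose W hWopen hW using fun i ↦ isOpen_induced_iff.1 (hopen i)
  have isOpen_inter (i : ι) : IsOpen (W i ∩ {y | y i ≠ 0}) :=
    (hWopen i).inter (isOpen_ne_fun (continuous_apply i) continuous_const)
  have subset_iUnion : stdSimplex ℝ ι ⊆ ⋃ i, W i ∩ {y | y i ≠ 0} := fun y hy ↦ by
    obtain ⟨i, hi, hmem⟩ := hcover ⟨y, hy⟩
    rw [← hW i] at hmem
    exact Set.mem_iUnion.2 ⟨i, hmem, hi⟩
  obtain ⟨δ, hδ, hball⟩ :=
    lebesgue_number_lemma_of_metric (isCompact_stdSimplex ℝ ι) isOpen_inter subset_iUnion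
  refine ⟨δ, hδ, fun x ↦ ?_⟩
  obtain ⟨i, hi⟩ := hball x.1 x.2
  refine ⟨i, le_of_not_gt fun (hlt : x.1 i < δ) ↦ ?_, fun y hy ↦ hW i ▸ (hi hy).1⟩
  -- This point is not in the simplex, which is why the Lebesgue number is that of a cover by open
  -- sets of the ambient space.
  have update_mem_ball : Function.update x.1 i 0 ∈ Metric.ball x.1 δ := by
    refine (dist_pi_lt_iff hδ).2 fun j ↦ ?_
    obtain rfl | hji := eq_or_ne j i
    · simpa [abs_of_nonneg (x.2.1 j)] using hlt
    · simpa [hji] using hδ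
  exact (hi update_mem_ball).2 (Function.update_self ..)

variable [DecidableEq ι] {N : ℕ}

/-- The point of the simplex with barycentric coordinates `a i / N`. -/
noncomputable def SimplexGrid.toStdSimplex [NeZero N] (a : SimplexGrid ι N) : stdSimplex ℝ ι :=
  ⟨fun i ↦ a.1 i / N, fun i ↦ by positivity, by
    rw [← sum_div, ← Nat.cast_sum, a.sum_eq, div_self (NeZero.ne _)]⟩

theorem SimplexGrid.toStdSimplex_apply [NeZero N] (a : SimplexGrid ι N) (i : ι) :
    a.toStdSimplex i = a.1 i / N :=
  rfl

theorem SimplexGrid.dist_toStdSimplex_le [NeZero N] {a b : SimplexGrid ι N} {r : ℕ}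
    (hab : ∀ i, a.1 i ≤ b.1 i + r) (hba : ∀ i, b.1 i ≤ a.1 i + r) :
    dist a.toStdSimplex b.toStdSimplex ≤ r / N := by
  refine (dist_pi_le_iff (by positivity)).2 fun i ↦ ?_
  change |(a.1 i / N - b.1 i / N : ℝ)| ≤ r / N
  have hab' : (a.1 i : ℝ) ≤ b.1 i + r := mod_cast hab i
  have hba' : (b.1 i : ℝ) ≤ a.1 i + r := mod_cast hba i
  rw [← sub_div, abs_div, Nat.abs_cast]
  gcongr
  exact abs_sub_le_iff.2 ⟨by linarith, by linarith⟩

end Topology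

theorem open_kkm_general {ι : Type*} [Fintype ι] [Nonempty ι] {G : ι → Set (stdSimplex ℝ ι)}
    (hopen : ∀ i, IsOpen (G i)) (hcover : ∀ x : stdSimplex ℝ ι, ∃ i, x i ≠ 0 ∧ x ∈ G i) :
    (⋂ i, G i).Nonempty := by
  classical
  obtain ⟨δ, hδ, hleb⟩ := exists_le_coord_and_ball_subset hopen hcover
  choose label le_coord ball_subset using hleb
  obtain ⟨N, hN⟩ := exists_nat_gt (Fintype.card ι / δ)
  have N_pos : (0 : ℝ) < N := lt_of_le_of_lt (by positivity) hN
  have : NeZero N := ⟨mod_cast N_pos.ne'⟩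
  have mesh_lt : (Fintype.card ι : ℝ) / N < δ := (div_lt_comm₀ hδ N_pos).1 hN
  have card_le_coord (a : SimplexGrid ι N) :
      Fintype.card ι ≤ a.1 (label a.toStdSimplex) := by
    have := mesh_lt.le.trans (le_coord a.toStdSimplex)
    rw [a.toStdSimplex_apply, div_le_div_iff_of_pos_right N_pos] at this
    exact_mod_cast this
  obtain ⟨p, label_p, p_close⟩ := SimplexGrid.exists_close_of_card_le card_le_coord
  refine ⟨(p (Classical.arbitrary ι)).toStdSimplex, Set.mem_iInter.2 fun i ↦ ?_⟩
  rw [← label_p i]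
  exact ball_subset _ <| (SimplexGrid.dist_toStdSimplex_le (fun l ↦ (p_close _ i l).le)
    fun l ↦ (p_close i _ l).le).trans_lt mesh_lt

/-- Topological Sperner / open KKM lemma: if `n + 2` open subsets of the standard
`(n+1)`-simplex cover it and the `i`-th one is disjoint from the `i`-th facet, then
they have a common point. -/
theorem open_kkm (n : ℕ) (hn : 1 ≤ n)
    (G : Fin (n + 2) → Set (stdSimplex ℝ (Fin (n + 2))))
    (hGopen : ∀ i, IsOpen (G i))
    (hGcover : (⋃ i, G i) = Set.univ)
    (hGface : ∀ i : Fin (n + 2),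
      G i ∩ {x : stdSimplex ℝ (Fin (n + 2)) | (x : Fin (n + 2) → ℝ) i = 0} = ∅) :
    (⋂ i, G i).Nonempty :=
  open_kkm_general hGopen fun x ↦
    have ⟨i, hi⟩ := Set.iUnion_eq_univ_iff.1 hGcover x
    ⟨i, fun h0 ↦ (hGface i).subset ⟨hi, h0⟩, hi⟩
end
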